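/- Let P ⊂ ℝ^n be a smooth full-dimensional lattice polytope. Then the alternating sum over all nonempty faces F of P (including P itself) satisfies Σ_F (-1)^{n - dim F} (dim F + 1)! Vol(F) ≥ 0, where Vol(F) denotes the relative lattice volume of the face F. -/

import Mathlib

noncomputable section

open MeasureTheory Pointwise

/-- A point of `ℝ^n` is a lattice point if all its coordinates are integers. -/
def IsLatticePt {n : ℕ} (x : Fin n → ℝ) : Prop := ∀ i, ∃ z : ℤ, x i = (z : ℝ)

/-- A lattice polytope is the convex hull of a finite set of lattice points. -/
def IsLatticePolytope {n : ℕ} (P : Set (Fin n → ℝ)) : Prop :=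
  ∃ V : Finset (Fin n → ℝ), (∀ v ∈ V, IsLatticePt v) ∧
    P = convexHull ℝ (↑V : Set (Fin n → ℝ))

/-- A rational polytope is the convex hull of a finite set of rational points. -/
def IsRatPolytope {n : ℕ} (P : Set (Fin n → ℝ)) : Prop :=
  ∃ V : Finset (Fin n → ℝ), (∀ v ∈ V, ∀ i, ∃ q : ℚ, v i = (q : ℝ)) ∧
    P = convexHull ℝ (↑V : Set (Fin n → ℝ))

/-- The vertices `0, e_1, …, e_t` of the standard unimodular simplex `Δ_t ⊆ ℝ^t`. -/
def stdSimplexVert (t : ℕ) (k : Fin (t + 1)) : Fin t → ℝ :=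
  fun j => if (k : ℕ) = (j : ℕ) + 1 then 1 else 0

/-- The standard unimodular simplex `Δ_t = conv(0, e_1, …, e_t) ⊆ ℝ^t`. -/
def unimodSimplex (t : ℕ) : Set (Fin t → ℝ) := convexHull ℝ (Set.range (stdSimplexVert t))

/-- The interior of the dilate `s • P` contains a lattice point. -/
def HasInteriorLatticePt {n : ℕ} (P : Set (Fin n → ℝ)) (s : ℕ) : Prop :=
  ∃ x ∈ interior ((s : ℝ) • P), IsLatticePt x

/-- The codegree `cd(P)`: the least positive integer `t` such that the interior of `t • P`
contains a lattice point. -/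
def codeg {n : ℕ} (P : Set (Fin n → ℝ)) : ℕ :=
  sInf {t : ℕ | 0 < t ∧ HasInteriorLatticePt P t}

/-- Pairing of an integer vector with a real vector. -/
def iprod {n : ℕ} (a : Fin n → ℤ) (x : Fin n → ℝ) : ℝ := ∑ i, (a i : ℝ) * x i

/-- An integer vector is primitive if it is nonzero and its coordinates have no common
non-unit divisor. -/
def IsPrimitive {n : ℕ} (a : Fin n → ℤ) : Prop :=
  a ≠ 0 ∧ ∀ d : ℤ, (∀ i, d ∣ a i) → IsUnit d

/-- `(a, b)` is a facet inequality of `P ⊆ ℝ^n`: `a` is a primitive integer inner normal,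
`b = min_{x ∈ P} ⟨a, x⟩`, and the corresponding face has dimension `n - 1`. -/
def IsFacetIneq {n : ℕ} (P : Set (Fin n → ℝ)) (a : Fin n → ℤ) (b : ℝ) : Prop :=
  IsPrimitive a ∧ (∀ x ∈ P, b ≤ iprod a x) ∧
  {x ∈ P | iprod a x = b}.Nonempty ∧
  Module.finrank ℝ ↥(vectorSpan ℝ {x ∈ P | iprod a x = b}) = n - 1

/-- The adjoint polytope `P^(s) = {x : ⟨a_F, x⟩ ≥ b_F + s for all facets F}`. -/
def adjointPoly {n : ℕ} (P : Set (Fin n → ℝ)) (s : ℝ) : Set (Fin n → ℝ) :=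
  {x | ∀ a b, IsFacetIneq P a b → b + s ≤ iprod a x}

/-- The set `{s > 0 : P^(s) ≠ ∅}`; the ℚ-codegree is `μ(P) = (sSup (muSet P))⁻¹`. -/
def muSet {n : ℕ} (P : Set (Fin n → ℝ)) : Set ℝ :=
  {s : ℝ | 0 < s ∧ (adjointPoly P s).Nonempty}

/-- `F` is a (nonempty, exposed) face of the polytope `P`; with `u = 0` this includes
`P` itself. -/
def IsFace {n : ℕ} (P F : Set (Fin n → ℝ)) : Prop :=
  F.Nonempty ∧ ∃ (u : (Fin n → ℝ) →ₗ[ℝ] ℝ) (c : ℝ),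
    (∀ x ∈ P, c ≤ u x) ∧ F = {x ∈ P | u x = c}

/-- The dimension of a face (or polytope): the rank of its direction vector space. -/
def fdim {n : ℕ} (F : Set (Fin n → ℝ)) : ℕ := Module.finrank ℝ ↥(vectorSpan ℝ F)

/-- `vol` is the relative lattice volume of `F`: the Lebesgue volume of the image of `F`
under an affine isomorphism of `aff F` with `ℝ^{dim F}` carrying `(aff F) ∩ ℤ^n` onto
`ℤ^{dim F}`. -/
def HasRelVol {n : ℕ} (F : Set (Fin n → ℝ)) (vol : ℝ) : Prop :=
  ∃ T : (Fin n → ℝ) →ᵃ[ℝ] (Fin (fdim F) → ℝ),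
    Set.BijOn T (affineSpan ℝ F : Set (Fin n → ℝ)) Set.univ ∧
    T '' ((affineSpan ℝ F : Set (Fin n → ℝ)) ∩ {x | IsLatticePt x}) = {y | IsLatticePt y} ∧
    vol = (volume (T '' F)).toReal

/-- The alternating face sum `Σ_F (-1)^{n - dim F} (dim F + 1)! Vol(F)`. -/
def faceSum {n : ℕ} (𝓕 : Finset (Set (Fin n → ℝ))) (volf : Set (Fin n → ℝ) → ℝ) : ℝ :=
  ∑ F ∈ 𝓕, (-1 : ℝ) ^ (n - fdim F) * (Nat.factorial (fdim F + 1) : ℝ) * volf F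

/-- The alternating sum over all nonempty faces of `P` of
`(-1)^{n - dim F} (dim F + 1)! Vol(F)` vanishes. -/
def FaceSumZero {n : ℕ} (P : Set (Fin n → ℝ)) : Prop :=
  ∃ (𝓕 : Finset (Set (Fin n → ℝ))) (volf : Set (Fin n → ℝ) → ℝ),
    (∀ F, F ∈ 𝓕 ↔ IsFace P F) ∧ (∀ F ∈ 𝓕, HasRelVol F (volf F)) ∧
    faceSum 𝓕 volf = 0

/-- A polytope `R ⊆ ℝ^n` (of dimension `d = fdim R`) is smooth: at each vertex there are
exactly `d` edges, whose primitive integer direction vectors form a ℤ-basis of the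
lattice `(vectorSpan R) ∩ ℤ^n`. -/
def IsSmoothPoly {n : ℕ} (R : Set (Fin n → ℝ)) : Prop :=
  ∀ v ∈ Set.extremePoints ℝ R,
    ∃ (w : Fin (fdim R) → (Fin n → ℤ)) (c : Fin (fdim R) → ℝ),
      (∀ i, 0 < c i) ∧ (∀ i, IsPrimitive (w i)) ∧
      LinearIndependent ℝ (fun i => ((fun j => ((w i j : ℝ))) : Fin n → ℝ)) ∧
      (∀ i, ((fun j => ((w i j : ℝ))) : Fin n → ℝ) ∈ vectorSpan ℝ R) ∧
      (∀ z : Fin n → ℤ, ((fun j => (z j : ℝ)) : Fin n → ℝ) ∈ vectorSpan ℝ R →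
        ∃ m : Fin (fdim R) → ℤ,
          ((fun j => (z j : ℝ)) : Fin n → ℝ) =
            ∑ i, (m i : ℝ) • ((fun j => ((w i j : ℝ))) : Fin n → ℝ)) ∧
      (∀ F : Set (Fin n → ℝ), (IsFace R F ∧ v ∈ F ∧ fdim F = 1) ↔
        ∃ i, F = segment ℝ v (v + c i • ((fun j => ((w i j : ℝ))) : Fin n → ℝ)))

/-- The real-linear map `ℝ^n → ℝ^t` induced by an integer matrix. -/
def matMap {t n : ℕ} (A : Matrix (Fin t) (Fin n) ℤ) : (Fin n → ℝ) → (Fin t → ℝ) :=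
  fun x k => ∑ j, (A k j : ℝ) * x j

/-- The piece `R_k = P ∩ π_ℝ^{-1}(v_k)` of a Cayley sum over the `k`-th vertex of `Δ_t`. -/
def cayleyPiece {t n : ℕ} (A : Matrix (Fin t) (Fin n) ℤ) (P : Set (Fin n → ℝ))
    (k : Fin (t + 1)) : Set (Fin n → ℝ) :=
  {x ∈ P | matMap A x = stdSimplexVert t k}

/-- Two polytopes are normally equivalent (have the same normal fan): for all linear
functionals `u, v`, the minimizing face of `u` equals that of `v` on `R` precisely when the
same holds on `S`. -/
def NormEquiv {n : ℕ} (R S : Set (Fin n → ℝ)) : Prop :=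
  ∀ u v : (Fin n → ℝ) →ₗ[ℝ] ℝ,
    ({x ∈ R | ∀ y ∈ R, u x ≤ u y} = {x ∈ R | ∀ y ∈ R, v x ≤ v y}) ↔
    ({x ∈ S | ∀ y ∈ S, u x ≤ u y} = {x ∈ S | ∀ y ∈ S, v x ≤ v y})

/-- `Q` is the Cayley sum, via the surjective lattice projection `A : ℤ^n → ℤ^t`, of the
normally equivalent polytopes `R_k = Q ∩ π_ℝ^{-1}(v_k)`: `π_ℝ` maps `Q` onto `Δ_t`. -/
def IsCayleyWith {n t : ℕ} (Q : Set (Fin n → ℝ)) (A : Matrix (Fin t) (Fin n) ℤ) : Prop :=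
  (∀ y : Fin t → ℤ, ∃ x : Fin n → ℤ, A.mulVec x = y) ∧
  matMap A '' Q = unimodSimplex t ∧
  ∀ k l : Fin (t + 1), NormEquiv (cayleyPiece A Q k) (cayleyPiece A Q l)

/-- The unimodular affine map `x ↦ Ux + w`. -/
def unimodMap {n : ℕ} (U : Matrix (Fin n) (Fin n) ℤ) (w : Fin n → ℤ) :
    (Fin n → ℝ) → (Fin n → ℝ) :=
  fun x i => (∑ j, (U i j : ℝ) * x j) + (w i : ℝ)

/-- The set `{s > 0 : P^(s) has the same normal fan as P}`; the nef value is
`τ(P) = (sSup (tauSet P))⁻¹`. -/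
def tauSet {n : ℕ} (P : Set (Fin n → ℝ)) : Set ℝ :=
  {s : ℝ | 0 < s ∧ NormEquiv (adjointPoly P s) P}


/-!
Near a vertex a smooth lattice polytope is a unimodular corner: the edge directions form a lattice
basis, and the dual coordinates are the lattice distances (slacks) to the `n` facets through the
vertex. So the nonempty faces correspond to the sets `s` of facets with a common point, the face of
`s` having dimension `n - |s|`, and with `g s = (n - |s|)! Vol` the sum in question is
`∑ s, (-1)^|s| (n + 1 - |s|) g s`.

Fix a vertex `c` of the face of `s`. Cutting this face into the pyramids with apex `c` over its
facets missing `c` gives `g s = ∑ j, h j * g (insert j s)`, where `h j` is the slack of `c` at the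
facet `j`; for `j` missing `c` it is a positive integer, hence at least `1`. Bonferroni's
inequality bounds an alternating sum of `g` below by its part over the facets through `c` minus
first-order terms over the facets missing `c`, and since `h j ≥ 1` the pyramid formula pays for
these terms. By induction on the dimension of the face this shows that the local alternating sums
of `g` are nonnegative, and then, since the weights `n + 1 - |s|` change the pyramid formula only by
an extra summand `g s`, that those of `(n + 1 - |s|) g s` are nonnegative too.
-/


section AlternatingSums

variable {ι R : Type*} [DecidableEq ι] [CommRing R]

/-- The alternating sum `∑_{t ⊆ M} (-1)^|t| g (s ∪ t)`. When `g` is a sum over the sets containing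
its argument, this is the part of `g s` not counted by any `g (insert j s)` with `j ∈ M`. -/
def altSum (g : Finset ι → R) (s M : Finset ι) : R :=
  ∑ t ∈ M.powerset, (-1) ^ t.card * g (s ∪ t)

variable {g : Finset ι → R} {s M : Finset ι} {j : ι}

lemma altSum_empty (g : Finset ι → R) (s : Finset ι) : altSum g s ∅ = g s := by
  simp [altSum]

lemma altSum_insert (g : Finset ι → R) (s : Finset ι) (hj : j ∉ M) :
    altSum g s (insert j M) = altSum g s M - altSum g (insert j s) M := by
  unfold altSum
  rw [Finset.sum_powerset_insert hj, sub_eq_add_neg, ← Finset.sum_neg_distrib]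
  congr 1
  refine Finset.sum_congr rfl fun t ht ↦ ?_
  have hjt : j ∉ t := fun h ↦ hj (Finset.mem_powerset.1 ht h)
  rw [Finset.card_insert_of_notMem hjt, Finset.union_insert, Finset.insert_union, pow_succ]
  ring

lemma altSum_eq_zero_of_not_disjoint (g : Finset ι → R) (h : ¬ Disjoint s M) :
    altSum g s M = 0 := by
  obtain ⟨a, has, haM⟩ := Finset.not_disjoint_iff.1 h
  rw [← Finset.insert_erase haM, altSum_insert g s (Finset.notMem_erase a M),
    Finset.insert_eq_of_mem has, sub_self]

lemma altSum_eq_zero_of_forall_superset (M : Finset ι) (h : ∀ t, s ⊆ t → g t = 0) :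
    altSum g s M = 0 :=
  Finset.sum_eq_zero fun t _ ↦ by rw [h _ Finset.subset_union_left, mul_zero]

lemma altSum_eq_add_sum {r : Finset ι → R} {y : ι → R} {C : Finset ι}
    (h : ∀ t ⊆ M, g (s ∪ t) = r (s ∪ t) + ∑ j ∈ C, y j * g (insert j (s ∪ t))) :
    altSum g s M = altSum r s M + ∑ j ∈ C, y j * altSum g (insert j s) M := by
  simp_rw [altSum, Finset.mul_sum]
  rw [Finset.sum_comm, ← Finset.sum_add_distrib]
  refine Finset.sum_congr rfl fun t ht ↦ ?_
  rw [h t (Finset.mem_powerset.1 ht), mul_add, Finset.mul_sum]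
  congr 1
  refine Finset.sum_congr rfl fun j _ ↦ ?_
  rw [Finset.insert_union]
  ring

variable [LinearOrder R] [IsStrictOrderedRing R]

lemma altSum_union_le {A B : Finset ι} (hAB : Disjoint A B)
    (h : ∀ k ∈ B, ∀ M ⊆ A ∪ B, k ∉ M → 0 ≤ altSum g (insert k s) M) :
    altSum g s (A ∪ B) ≤ altSum g s A := by
  induction B using Finset.induction_on with
  | empty => simp
  | insert k B hk ih =>
    rw [Finset.disjoint_insert_right] at hAB
    have hkAB : k ∉ A ∪ B := by simp [hAB.1, hk]
    have hsub : A ∪ B ⊆ A ∪ insert k B := Finset.union_subset_union_right (Finset.subset_insert k B)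
    rw [Finset.union_insert, altSum_insert g s hkAB]
    linarith [ih hAB.2 fun i hi M hM ↦ h i (Finset.mem_insert_of_mem hi) M (hM.trans hsub),
      h k (Finset.mem_insert_self k B) (A ∪ B) hsub hkAB]

-- Bonferroni's inequality: inclusion–exclusion truncated after the first-order terms.
lemma altSum_sub_sum_le_altSum_union {A B : Finset ι} (hAB : Disjoint A B)
    (h : ∀ j ∈ B, ∀ k ∈ B, j ≠ k → ∀ M ⊆ A ∪ B, j ∉ M → k ∉ M →
      0 ≤ altSum g (insert k (insert j s)) M) :
    altSum g s A - ∑ j ∈ B, altSum g (insert j s) A ≤ altSum g s (A ∪ B) := by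
  induction B using Finset.induction_on with
  | empty => simp
  | insert k B hk ih =>
    rw [Finset.disjoint_insert_right] at hAB
    have hkAB : k ∉ A ∪ B := by simp [hAB.1, hk]
    have hsub : A ∪ B ⊆ A ∪ insert k B := Finset.union_subset_union_right (Finset.subset_insert k B)
    have hle : altSum g (insert k s) (A ∪ B) ≤ altSum g (insert k s) A :=
      altSum_union_le hAB.2 fun i hi M hM hiM ↦
        h k (Finset.mem_insert_self k B) i (Finset.mem_insert_of_mem hi)
          (ne_of_mem_of_not_mem hi hk).symm M (hM.trans hsub) (fun hkM ↦ hkAB (hM hkM)) hiM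
    rw [Finset.union_insert, altSum_insert g s hkAB, Finset.sum_insert hk]
    linarith [ih hAB.2 fun i hi l hl hil M hM ↦
      h i (Finset.mem_insert_of_mem hi) l (Finset.mem_insert_of_mem hl) hil M (hM.trans hsub)]

variable [Fintype ι]

lemma altSum_nonneg_of_pyramid {r : Finset ι → R} {y : ι → R} {c : Finset ι}
    (h : ∀ j ∉ c, ∀ k ∉ c, j ≠ k → j ∈ M → k ∈ M → ∀ M' ⊆ M, j ∉ M' → k ∉ M' →
      0 ≤ altSum g (insert k (insert j s)) M')
    (hy : ∀ j ∉ c, 1 ≤ y j)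
    (hg : ∀ t ⊆ M ∩ c, g (s ∪ t) = r (s ∪ t) + ∑ j ∈ cᶜ, y j * g (insert j (s ∪ t)))
    (hpos : ∀ j ∉ c, 0 ≤ altSum g (insert j s) (M ∩ c))
    (hr : 0 ≤ altSum r s (M ∩ c)) : 0 ≤ altSum g s M := by
  have hM : M ∩ c ∪ M \ c = M := by rw [Finset.union_comm, Finset.sdiff_union_inter]
  have hbonf := altSum_sub_sum_le_altSum_union (g := g) (s := s)
    (Finset.disjoint_sdiff_inter M c).symm (by
      simp only [hM, Finset.mem_sdiff]
      exact fun j hj k hk hjk ↦ h j hj.2 k hk.2 hjk hj.1 hk.1)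
  have hle : ∑ j ∈ M \ c, altSum g (insert j s) (M ∩ c) ≤
      ∑ j ∈ cᶜ, y j * altSum g (insert j s) (M ∩ c) :=
    calc ∑ j ∈ M \ c, altSum g (insert j s) (M ∩ c)
        ≤ ∑ j ∈ cᶜ, altSum g (insert j s) (M ∩ c) :=
          Finset.sum_le_sum_of_subset_of_nonneg (fun j hj ↦ by simp_all)
            fun j hj _ ↦ hpos j (Finset.mem_compl.1 hj)
      _ ≤ ∑ j ∈ cᶜ, y j * altSum g (insert j s) (M ∩ c) :=
          Finset.sum_le_sum fun j hj ↦ le_mul_of_one_le_left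
            (hpos j (Finset.mem_compl.1 hj)) (hy j (Finset.mem_compl.1 hj))
  rw [hM, altSum_eq_add_sum hg] at hbonf
  linarith

end AlternatingSums

/-- The numerical shadow of a simple `n`-dimensional lattice polytope whose facets are indexed by
`ι`: `vert c` is the set of facets through the vertex `c`, `h c j` is the lattice distance from `c`
to the facet `j`, and `g s` is the normalized volume of the face cut out by the facets in `s`
(zero if there is none). The field `pyramid` decomposes a face into the pyramids with apex `c` over
those of its facets that miss `c`. -/
structure IsPyramidSystem {ι V R : Type*} [DecidableEq ι] [Fintype ι] [CommRing R] [LinearOrder R]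
    (n : ℕ) (vert : V → Finset ι) (h : V → ι → R) (g : Finset ι → R) : Prop where
  card_vert : ∀ c, (vert c).card = n
  nonneg : ∀ s, 0 ≤ g s
  one_le_height : ∀ c, ∀ j ∉ vert c, 1 ≤ h c j
  pyramid : ∀ c, ∀ s ⊆ vert c, s.card < n → g s = ∑ j ∈ (vert c)ᶜ, h c j * g (insert j s)
  eq_zero : ∀ s, (¬ ∃ c, s ⊆ vert c) → g s = 0
  exists_vert_ne : ∀ c, ∀ s ⊆ vert c, s.card < n → ∃ c', s ⊆ vert c' ∧ vert c' ≠ vert c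

namespace IsPyramidSystem

variable {ι V R : Type*} [DecidableEq ι] [Fintype ι] [CommRing R] [LinearOrder R] {n : ℕ}
  {vert : V → Finset ι} {h : V → ι → R} {g : Finset ι → R} {s M : Finset ι} {c : V}

lemma card_le (H : IsPyramidSystem n vert h g) (hs : s ⊆ vert c) : s.card ≤ n :=
  H.card_vert c ▸ Finset.card_le_card hs

lemma exists_card_union_inter_lt (H : IsPyramidSystem n vert h g) (hs : ∃ c, s ⊆ vert c)
    (hsn : s.card < n) (hsM : s.card + M.card ≤ n) :
    ∃ c, s ⊆ vert c ∧ (s ∪ M ∩ vert c).card < n := by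
  by_contra! hge
  have hvert : ∀ c, s ⊆ vert c → vert c = s ∪ M := fun c hc ↦ by
    have h₁ : s ∪ M ∩ vert c = vert c := Finset.eq_of_subset_of_card_le
      (Finset.union_subset hc Finset.inter_subset_right) ((H.card_vert c).trans_le (hge c hc))
    have h₂ : s ∪ M ∩ vert c = s ∪ M := Finset.eq_of_subset_of_card_le
      (Finset.union_subset_union_right Finset.inter_subset_left)
      (((Finset.card_union_le s M).trans hsM).trans (hge c hc))
    rw [← h₁, h₂]
  obtain ⟨c, hc⟩ := hs
  obtain ⟨c', hc', hne⟩ := H.exists_vert_ne c s hc hsn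
  exact hne ((hvert c' hc').trans (hvert c hc).symm)

lemma altSum_eq_zero (H : IsPyramidSystem n vert h g) (hs : ¬ ∃ c, s ⊆ vert c) (w : Finset ι → R)
    (M : Finset ι) : altSum (fun t ↦ w t * g t) s M = 0 :=
  altSum_eq_zero_of_forall_superset M fun t hst ↦ by
    rw [H.eq_zero t fun ⟨c, hc⟩ ↦ hs ⟨c, hst.trans hc⟩, mul_zero]

lemma mul_eq_add_sum (H : IsPyramidSystem n vert h g) (hs : s ⊆ vert c) :
    ((n : R) + 1 - s.card) * g s =
      g s + ∑ j ∈ (vert c)ᶜ, h c j * (((n : R) + 1 - (insert j s).card) * g (insert j s)) := by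
  have hsum : ∑ j ∈ (vert c)ᶜ, h c j * (((n : R) + 1 - (insert j s).card) * g (insert j s)) =
      ((n : R) - s.card) * ∑ j ∈ (vert c)ᶜ, h c j * g (insert j s) := by
    rw [Finset.mul_sum]
    refine Finset.sum_congr rfl fun j hj ↦ ?_
    rw [Finset.card_insert_of_notMem fun hjs ↦ Finset.mem_compl.1 hj (hs hjs)]
    push_cast
    ring
  rw [hsum]
  rcases (H.card_le hs).lt_or_eq with hlt | heq
  · rw [← H.pyramid c s hs hlt]
    ring
  · rw [heq]
    ring

variable [IsStrictOrderedRing R]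

theorem altSum_nonneg (H : IsPyramidSystem n vert h g) {s M : Finset ι}
    (hsM : s.card + M.card ≤ n) : 0 ≤ altSum g s M := by
  induction hk : n - s.card using Nat.strong_induction_on generalizing s M with
  | _ k ih =>
  subst hk
  by_cases hs : ∃ c, s ⊆ vert c
  swap
  · simpa using (H.altSum_eq_zero hs 1 M).ge
  rcases Nat.lt_or_ge s.card n with hsn | hsn
  swap
  · rw [Finset.card_eq_zero.1 (by omega : M.card = 0), altSum_empty]
    exact H.nonneg s
  obtain ⟨c, hsc, hlt⟩ := H.exists_card_union_inter_lt hs hsn hsM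
  refine altSum_nonneg_of_pyramid (r := 0) ?_ (H.one_le_height c) (fun t ht ↦ ?_) (fun j hj ↦ ?_)
    (by simp [altSum])
  · intro j hj k hk hjk hjM hkM M' hM' hjM' hkM'
    have hcard : (insert k (insert j s)).card = s.card + 2 := by
      rw [Finset.card_insert_of_notMem (by simp [hjk.symm, Finset.notMem_mono hsc hk]),
        Finset.card_insert_of_notMem fun hjs ↦ hj (hsc hjs)]
    have hM'card : M'.card + 2 ≤ M.card := by
      rw [← Finset.card_pair hjk, ← Finset.card_union_of_disjoint (by simp [hjM', hkM'])]
      exact Finset.card_le_card (Finset.union_subset hM' (by simp [Finset.insert_subset_iff, *]))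
    exact ih _ (by omega) (by omega) rfl
  · have hcard := Finset.card_le_card (Finset.union_subset_union_right (s := s) ht)
    rw [Pi.zero_apply, zero_add]
    exact H.pyramid c _ (Finset.union_subset hsc (ht.trans Finset.inter_subset_right)) (by omega)
  · have hcard : (insert j s).card = s.card + 1 :=
      Finset.card_insert_of_notMem fun hjs ↦ hj (hsc hjs)
    by_cases hd : Disjoint s (M ∩ vert c)
    · rw [Finset.card_union_of_disjoint hd] at hlt
      exact ih _ (by omega) (by omega) rfl
    · refine (altSum_eq_zero_of_not_disjoint g fun h ↦ hd ?_).ge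
      exact h.mono_left (Finset.subset_insert j s)

theorem altSum_mul_nonneg (H : IsPyramidSystem n vert h g) (s M : Finset ι) :
    0 ≤ altSum (fun t ↦ ((n : R) + 1 - t.card) * g t) s M := by
  induction hk : n + 1 - s.card using Nat.strong_induction_on generalizing s M with
  | _ k ih =>
  subst hk
  by_cases hs : ∃ c, s ⊆ vert c
  swap
  · exact (H.altSum_eq_zero hs _ M).ge
  obtain ⟨c, hsc⟩ := hs
  have hsn := H.card_le hsc
  have hcard : ∀ j ∉ vert c, (insert j s).card = s.card + 1 := fun j hj ↦
    Finset.card_insert_of_notMem fun hjs ↦ hj (hsc hjs)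
  refine altSum_nonneg_of_pyramid ?_ (H.one_le_height c) (r := g)
    (fun t ht ↦ H.mul_eq_add_sum (Finset.union_subset hsc (ht.trans Finset.inter_subset_right)))
    (fun j hj ↦ ih _ (by have := hcard j hj; omega) _ _ rfl) ?_
  · intro j hj k _ _ _ _ M' _ _ _
    have hle : (insert j s).card ≤ (insert k (insert j s)).card :=
      Finset.card_le_card (Finset.subset_insert _ _)
    exact ih _ (by have := hcard j hj; omega) _ _ rfl
  · by_cases hd : Disjoint s (M ∩ vert c)
    · refine H.altSum_nonneg ?_
      rw [← Finset.card_union_of_disjoint hd]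
      exact H.card_le (Finset.union_subset hsc Finset.inter_subset_right)
    · exact (altSum_eq_zero_of_not_disjoint g hd).ge

theorem sum_nonneg (H : IsPyramidSystem n vert h g) :
    0 ≤ ∑ s, (-1) ^ s.card * (((n : R) + 1 - s.card) * g s) := by
  simpa [altSum] using H.altSum_mul_nonneg ∅ Finset.univ

end IsPyramidSystem

section LatticeVolume

variable {m n : ℕ} {x y : Fin n → ℝ}

lemma isLatticePt_zero : IsLatticePt (0 : Fin n → ℝ) := fun _ ↦ ⟨0, by simp⟩

lemma isLatticePt_single (i : Fin n) : IsLatticePt (Pi.single i 1) := fun j ↦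
  ⟨(Pi.single i 1 : Fin n → ℤ) j, by simp [Pi.single_apply, apply_ite]⟩

lemma IsLatticePt.add (hx : IsLatticePt x) (hy : IsLatticePt y) : IsLatticePt (x + y) := fun i ↦ by
  obtain ⟨⟨a, ha⟩, b, hb⟩ := hx i, hy i
  exact ⟨a + b, by simp [ha, hb]⟩

lemma IsLatticePt.sub (hx : IsLatticePt x) (hy : IsLatticePt y) : IsLatticePt (x - y) := fun i ↦ by
  obtain ⟨⟨a, ha⟩, b, hb⟩ := hx i, hy i
  exact ⟨a - b, by simp [ha, hb]⟩

lemma IsLatticePt.intCast_smul (z : ℤ) (hx : IsLatticePt x) :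
    IsLatticePt ((z : ℝ) • x) := fun i ↦ by
  obtain ⟨a, ha⟩ := hx i
  exact ⟨z * a, by simp [ha]⟩

lemma isLatticePt_sum {κ : Type*} (s : Finset κ) {x : κ → Fin n → ℝ}
    (hx : ∀ k ∈ s, IsLatticePt (x k)) : IsLatticePt (∑ k ∈ s, x k) :=
  Finset.sum_induction x IsLatticePt (fun _ _ ↦ IsLatticePt.add) isLatticePt_zero hx

lemma exists_int_eq_det {f : (Fin n → ℝ) →ₗ[ℝ] Fin n → ℝ}
    (hf : ∀ x, IsLatticePt x → IsLatticePt (f x)) : ∃ z : ℤ, LinearMap.det f = z := by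
  choose M hM using fun i j ↦ hf _ (isLatticePt_single j) i
  have hmat : f.toMatrix' = (Int.castRingHom ℝ).mapMatrix (Matrix.of M) := by
    ext i j
    simp [LinearMap.toMatrix'_apply, ← hM]
  exact ⟨(Matrix.of M).det, by rw [← LinearMap.det_toMatrix', hmat, ← RingHom.map_det]; rfl⟩

lemma abs_det_eq_one_of_image_lattice {f : (Fin n → ℝ) →ₗ[ℝ] Fin n → ℝ}
    (hf : f '' {x | IsLatticePt x} = {x | IsLatticePt x}) : |LinearMap.det f| = 1 := by
  have hsurj : Function.Surjective f := by
    rw [← LinearMap.range_eq_top, eq_top_iff, ← (Pi.basisFun ℝ (Fin n)).span_eq, Submodule.span_le]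
    rintro _ ⟨i, rfl⟩
    obtain ⟨x, -, hx⟩ := hf.ge (isLatticePt_single i)
    exact ⟨x, by rw [hx, Pi.basisFun_apply]⟩
  let e := LinearEquiv.ofBijective f ⟨LinearMap.injective_iff_surjective.2 hsurj, hsurj⟩
  obtain ⟨a, ha⟩ := exists_int_eq_det fun x hx ↦ hf.le (Set.mem_image_of_mem f hx)
  obtain ⟨b, hb⟩ := exists_int_eq_det (f := e.symm.toLinearMap) fun y hy ↦ by
    obtain ⟨x, hx, rfl⟩ := hf.ge hy
    exact (e.symm_apply_apply x).symm ▸ hx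
  have hab : a * b = 1 := by
    have hdet : LinearMap.det f * LinearMap.det (e.symm : (Fin n → ℝ) →ₗ[ℝ] Fin n → ℝ) = 1 :=
      e.det_mul_det_symm
    rw [ha, hb] at hdet
    exact_mod_cast hdet
  rcases Int.isUnit_iff.1 (IsUnit.of_mul_eq_one b hab) with h | h <;> simp [ha, h]

lemma volume_image_of_image_lattice {φ : (Fin n → ℝ) →ᵃ[ℝ] Fin n → ℝ}
    (hφ : φ '' {x | IsLatticePt x} = {x | IsLatticePt x}) (A : Set (Fin n → ℝ)) :
    volume (φ '' A) = volume A := by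
  have hdecomp (x : Fin n → ℝ) : φ x = φ 0 + φ.linear x := by
    rw [add_comm]
    exact congrFun φ.decomp x
  have h0 : IsLatticePt (φ 0) := hφ.le (Set.mem_image_of_mem φ isLatticePt_zero)
  have hlin : φ.linear '' {x | IsLatticePt x} = {x | IsLatticePt x} := by
    refine Set.Subset.antisymm ?_ fun y hy ↦ ?_
    · rintro _ ⟨x, hx, rfl⟩
      rw [← add_sub_cancel_left (φ 0) (φ.linear x), ← hdecomp]
      exact IsLatticePt.sub (hφ.le (Set.mem_image_of_mem φ hx)) h0
    · obtain ⟨x, hx, hxy⟩ := hφ.ge (h0.add hy)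
      exact ⟨x, hx, add_left_cancel ((hdecomp x).symm.trans hxy)⟩
  have himage : φ '' A = (φ 0 + ·) '' (φ.linear '' A) := by
    simp only [Set.image_image, ← hdecomp]
  rw [himage, Set.image_add_left, measure_preimage_add, Measure.addHaar_image_linearMap,
    abs_det_eq_one_of_image_lattice hlin, ENNReal.ofReal_one, one_mul]

end LatticeVolume

lemma volume_setOf_mul_eq_mul {d : ℕ} {a b : Fin d} (hab : a ≠ b) {α : ℝ} (hα : α ≠ 0) (β : ℝ) :
    volume {y : Fin d → ℝ | y a * α = y b * β} = 0 := by
  let φ : (Fin d → ℝ) →ₗ[ℝ] ℝ := α • LinearMap.proj a - β • LinearMap.proj b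
  have hker : {y : Fin d → ℝ | y a * α = y b * β} = LinearMap.ker φ := by
    ext y
    simp [φ, sub_eq_zero, mul_comm]
  rw [hker]
  refine Measure.addHaar_submodule _ _ fun htop ↦ hα ?_
  simpa [φ, hab.symm] using LinearMap.congr_fun (LinearMap.ker_eq_top.1 htop) (Pi.single a 1)

section Pyramids

variable {E : Type*} [NormedAddCommGroup E] [NormedSpace ℝ E] {d : ℕ}

lemma isCompact_convexJoin_singleton (c : E) {K : Set E} (hK : IsCompact K) :
    IsCompact (convexJoin ℝ {c} K) := by
  have himage : convexJoin ℝ {c} K =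
      (fun q : E × ℝ ↦ AffineMap.lineMap c q.1 q.2) '' K ×ˢ Set.Icc 0 1 := by
    ext x
    simp [convexJoin_singleton_left, segment_eq_image_lineMap, and_assoc]
  rw [himage]
  refine (hK.prod isCompact_Icc).image ?_
  simp only [AffineMap.lineMap_apply_module']
  fun_prop

lemma image_convexJoin_singleton {F : Type*} [AddCommGroup F] [Module ℝ F] (f : E →ᵃ[ℝ] F) (c : E)
    (K : Set E) : f '' convexJoin ℝ {c} K = convexJoin ℝ {f c} (f '' K) := by
  simp only [convexJoin_singleton_left, Set.image_iUnion, image_segment, Set.biUnion_image]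

lemma cons_mem_convexJoin_iff {p : Fin (d + 1) → ℝ} (hp : 0 < p 0) {B : Set (Fin d → ℝ)} {a : ℝ}
    {z : Fin d → ℝ} : (Fin.cons a z : Fin (d + 1) → ℝ) ∈ convexJoin ℝ {p} (Fin.cons 0 '' B) ↔
      a ∈ Set.Icc 0 (p 0) ∧ ∃ w ∈ B, z = (a / p 0) • Fin.tail p + (1 - a / p 0) • w := by
  have hpoint (w : Fin d → ℝ) (t : ℝ) :
      (1 - t) • p + t • (Fin.cons 0 w : Fin (d + 1) → ℝ) =
        Fin.cons ((1 - t) * p 0) ((1 - t) • Fin.tail p + t • w) := by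
    ext i
    refine Fin.cases ?_ (fun i ↦ ?_) i <;> simp [Fin.tail]
  simp only [mem_convexJoin, Set.mem_singleton_iff, exists_eq_left]
  constructor
  · rintro ⟨_, ⟨w, hw, rfl⟩, hmem⟩
    obtain ⟨t, ht, htw⟩ := (segment_eq_image ℝ p _).le hmem
    obtain ⟨rfl, rfl⟩ := Fin.cons_inj.1 ((hpoint w t).symm.trans htw)
    refine ⟨⟨mul_nonneg (sub_nonneg.2 ht.2) hp.le, mul_le_of_le_one_left hp.le ?_⟩, w, hw, ?_⟩
    · exact sub_le_self 1 ht.1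
    · rw [mul_div_cancel_right₀ _ hp.ne', sub_sub_cancel]
  · rintro ⟨ha, w, hw, rfl⟩
    refine ⟨_, ⟨w, hw, rfl⟩, (segment_eq_image ℝ p _).ge ⟨1 - a / p 0, ⟨?_, ?_⟩, ?_⟩⟩
    · exact sub_nonneg.2 ((div_le_one hp).2 ha.2)
    · linarith [div_nonneg ha.1 hp.le]
    · refine (hpoint w _).trans ?_
      rw [sub_sub_cancel, div_mul_cancel₀ _ hp.ne']

lemma volume_slice_convexJoin {p : Fin (d + 1) → ℝ} (hp : 0 < p 0) (B : Set (Fin d → ℝ)) (a : ℝ) :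
    volume {z : Fin d → ℝ | (Fin.cons a z : Fin (d + 1) → ℝ) ∈ convexJoin ℝ {p} (Fin.cons 0 '' B)} =
      (Set.Icc 0 (p 0)).indicator (fun a ↦ ENNReal.ofReal ((1 - a / p 0) ^ d) * volume B) a := by
  simp only [cons_mem_convexJoin_iff hp]
  by_cases ha : a ∈ Set.Icc 0 (p 0)
  · have hslice : {z | a ∈ Set.Icc 0 (p 0) ∧
        ∃ w ∈ B, z = (a / p 0) • Fin.tail p + (1 - a / p 0) • w} =
          ((a / p 0) • Fin.tail p + ·) '' ((1 - a / p 0) • B) := by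
      ext z
      simp only [ha, true_and, Set.mem_ofPred_eq, Set.mem_image, Set.mem_smul_set]
      aesop
    have hnonneg : 0 ≤ 1 - a / p 0 := sub_nonneg.2 ((div_le_one hp).2 ha.2)
    rw [hslice, Set.indicator_of_mem ha, Set.image_add_left, measure_preimage_add,
      Measure.addHaar_smul, Module.finrank_fin_fun, abs_of_nonneg (pow_nonneg hnonneg d)]
  · simp [ha]

lemma lintegral_Icc_one_sub_div_pow {h : ℝ} (hh : 0 < h) (d : ℕ) :
    ∫⁻ a in Set.Icc 0 h, ENNReal.ofReal ((1 - a / h) ^ d) = ENNReal.ofReal (h / (d + 1)) := by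
  have hnonneg : ∀ a ∈ Set.Icc 0 h, 0 ≤ (1 - a / h) ^ d := fun a ha ↦
    pow_nonneg (sub_nonneg.2 ((div_le_one hh).2 ha.2)) d
  rw [← ofReal_integral_eq_lintegral_ofReal
    (ContinuousOn.integrableOn_Icc (by fun_prop))
    ((ae_restrict_iff' measurableSet_Icc).2 (.of_forall hnonneg)),
    integral_Icc_eq_integral_Ioc, ← intervalIntegral.integral_of_le hh.le,
    intervalIntegral.integral_comp_sub_div (fun x : ℝ ↦ x ^ d) hh.ne' 1]
  simp [hh.ne', div_eq_mul_inv]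

theorem volume_convexJoin_cons_zero {p : Fin (d + 1) → ℝ} (hp : 0 < p 0) {B : Set (Fin d → ℝ)}
    (hB : IsCompact B) : volume (convexJoin ℝ {p} (Fin.cons 0 '' B)) =
      ENNReal.ofReal (p 0 / (d + 1)) * volume B := by
  have hcons : Continuous fun z : Fin d → ℝ ↦ (Fin.cons 0 z : Fin (d + 1) → ℝ) := by fun_prop
  have hmeas : MeasurableSet (convexJoin ℝ {p} (Fin.cons (0 : ℝ) '' B)) :=
    (isCompact_convexJoin_singleton p (hB.image hcons)).measurableSet
  let e := MeasurableEquiv.piFinSuccAbove (fun _ : Fin (d + 1) ↦ ℝ) 0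
  have hcons_eq (a : ℝ) (z : Fin d → ℝ) : e.symm (a, z) = Fin.cons a z := by
    simp [e, MeasurableEquiv.piFinSuccAbove, Fin.insertNthEquiv]
  have hpres := (volume_preserving_piFinSuccAbove (fun _ : Fin (d + 1) ↦ ℝ) 0).symm e
  rw [← hpres.measure_preimage_equiv,
    Measure.volume_eq_prod, Measure.prod_apply (e.symm.measurable hmeas)]
  simp only [Set.preimage_preimage, hcons_eq]
  change ∫⁻ a, volume {z | Fin.cons a z ∈ convexJoin ℝ {p} (Fin.cons 0 '' B)} = _
  simp only [volume_slice_convexJoin hp]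
  rw [lintegral_indicator measurableSet_Icc, lintegral_mul_const _ (by fun_prop),
    lintegral_Icc_one_sub_div_pow hp]

end Pyramids

section ExtremeSets

variable {E : Type*} [AddCommGroup E] [Module ℝ E] {P F : Set E}

lemma isExtreme_setOf_affineMap_eq_zero {f : E →ᵃ[ℝ] ℝ} (hf : ∀ x ∈ P, 0 ≤ f x) :
    IsExtreme ℝ P {x ∈ P | f x = 0} := by
  refine ⟨Set.sep_subset P _, ?_⟩
  rintro x hx y hy z ⟨-, hz⟩ hzxy
  obtain ⟨t, ⟨ht₀, ht₁⟩, rfl⟩ := (openSegment_eq_image_lineMap ℝ x y).le hzxy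
  rw [AffineMap.apply_lineMap, AffineMap.lineMap_apply_ring] at hz
  exact ⟨hx, by nlinarith [hf x hx, mul_nonneg ht₀.le (hf y hy)]⟩

variable [TopologicalSpace E] [T2Space E] [IsTopologicalAddGroup E] [ContinuousSMul ℝ E]
  [LocallyConvexSpace ℝ E]

lemma exists_mem_extremePoints_of_isExtreme (hF : IsExtreme ℝ P F) (hFc : IsCompact F)
    (hne : F.Nonempty) : ∃ v ∈ F, v ∈ P.extremePoints ℝ := by
  obtain ⟨v, hv⟩ := hFc.extremePoints_nonempty hne
  exact ⟨v, hv.1, hF.extremePoints_subset_extremePoints hv⟩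

end ExtremeSets

section Polyhedra

variable {E ι : Type*} [NormedAddCommGroup E] [NormedSpace ℝ E] {P : Set E}
  {slack : ι → E →ᵃ[ℝ] ℝ} {c x z z' : E}

lemma exists_slack_lt_of_isBounded (hP : ∀ x, x ∈ P ↔ ∀ i, 0 ≤ slack i x)
    (hb : Bornology.IsBounded P) (hc : c ∈ P) (hxc : x ≠ c) : ∃ i, slack i x < slack i c := by
  by_contra! hle
  obtain ⟨C, hC⟩ := Metric.isBounded_iff.1 hb
  have hC₀ : 0 ≤ C := dist_nonneg.trans (hC hc hc)
  have hdist : 0 < dist c x := dist_pos.2 hxc.symm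
  have hray : ∀ t : ℝ, 0 ≤ t → AffineMap.lineMap c x t ∈ P := fun t ht ↦ (hP _).2 fun i ↦ by
    rw [AffineMap.apply_lineMap, AffineMap.lineMap_apply_ring']
    exact add_nonneg (mul_nonneg ht (sub_nonneg.2 (hle i))) ((hP c).1 hc i)
  have hfar := hC hc (hray ((C + 1) / dist c x) (by positivity))
  rw [dist_left_lineMap, Real.norm_of_nonneg (by positivity), div_mul_cancel₀ _ hdist.ne'] at hfar
  linarith

-- The ray from `c` through `x` leaves `P` where the first slack vanishes.
lemma exists_mem_segment_slack_eq_zero [Finite ι] (hP : ∀ x, x ∈ P ↔ ∀ i, 0 ≤ slack i x)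
    (hb : Bornology.IsBounded P) (hc : c ∈ P) (hx : x ∈ P) (hxc : x ≠ c) :
    ∃ z ∈ P, ∃ j, slack j c ≠ 0 ∧ slack j z = 0 ∧ x ∈ segment ℝ c z ∧
      ∀ i, slack i c = 0 → slack i x = 0 → slack i z = 0 := by
  obtain ⟨i₀, hi₀⟩ := exists_slack_lt_of_isBounded hP hb hc hxc
  have : Nonempty ι := ⟨i₀⟩
  let ratio (i : ι) : ℝ := (slack i c - slack i x) / slack i c
  obtain ⟨j, hj⟩ := Finite.exists_max ratio
  have hpos : 0 < ratio j :=
    (div_pos (sub_pos.2 hi₀) (((hP x).1 hx i₀).trans_lt hi₀)).trans_le (hj i₀)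
  have hjc : slack j c ≠ 0 := fun h ↦ hpos.ne' (by simp [ratio, h])
  have hle_one : ratio j ≤ 1 := div_le_one_of_le₀ (sub_le_self _ ((hP x).1 hx j)) ((hP c).1 hc j)
  have hexit (i : ι) : slack i (AffineMap.lineMap c x (ratio j)⁻¹) =
      slack i c - (slack i c - slack i x) / ratio j := by
    rw [AffineMap.apply_lineMap, AffineMap.lineMap_apply_ring', div_eq_mul_inv]
    ring
  refine ⟨AffineMap.lineMap c x (ratio j)⁻¹, (hP _).2 fun i ↦ ?_, j, hjc, ?_, ?_, ?_⟩
  · rw [hexit, sub_nonneg, div_le_iff₀ hpos]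
    rcases ((hP c).1 hc i).eq_or_lt with hic | hic
    · simpa [← hic] using (hP x).1 hx i
    · rw [← div_le_iff₀' hic]
      exact hj i
  · rw [hexit, div_div_cancel₀ fun h ↦ hpos.ne' (by simp [ratio, h]), sub_self]
  · rw [segment_eq_image_lineMap]
    refine ⟨ratio j, ⟨hpos.le, hle_one⟩, ?_⟩
    rw [AffineMap.lineMap_lineMap_right, mul_inv_cancel₀ hpos.ne', AffineMap.lineMap_apply_one]
  · intro i hic hix
    rw [hexit, hic, hix, sub_zero, zero_div, sub_zero]

lemma affineMap_mul_eq_of_mem_segment {f g : E →ᵃ[ℝ] ℝ} (hfc : 0 < f c) (hgc : 0 < g c)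
    (hfz : f z = 0) (hgz : 0 ≤ g z) (hfz' : 0 ≤ f z') (hgz' : g z' = 0)
    (hx : x ∈ segment ℝ c z) (hx' : x ∈ segment ℝ c z') : f x * g c = g x * f c := by
  rw [segment_eq_image_lineMap] at hx hx'
  obtain ⟨t, ht, rfl⟩ := hx
  obtain ⟨t', ht', heq⟩ := hx'
  have hf := congrArg f heq
  have hg := congrArg g heq
  simp only [AffineMap.apply_lineMap, AffineMap.lineMap_apply_ring, hfz, hgz', mul_zero, add_zero]
    at hf hg ⊢
  have hle : t ≤ t' := by nlinarith [mul_nonneg ht'.1 hfz']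
  have hge : t' ≤ t := by nlinarith [mul_nonneg ht.1 hgz]
  obtain rfl := hle.antisymm hge
  rw [← hg]
  ring

lemma affineMap_eq_zero_of_mem_segment {f g : E →ᵃ[ℝ] ℝ} (hfc : f c ≠ 0) (hfz : f z = 0)
    (hx : x ∈ segment ℝ c z) (hxc : x ≠ c) (hfg : f x * g c = g x * f c) : g z = 0 := by
  rw [segment_eq_image_lineMap] at hx
  obtain ⟨t, -, rfl⟩ := hx
  have ht : t ≠ 0 := by
    rintro rfl
    exact hxc (AffineMap.lineMap_apply_zero c z)
  simp only [AffineMap.apply_lineMap, AffineMap.lineMap_apply_ring, hfz] at hfg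
  have hprod : t * f c * g z = 0 := by linear_combination -hfg
  simpa [ht, hfc] using hprod

end Polyhedra

section FacetSystems

/-- `P` is unimodular at `v`, with `b` the basis of primitive edge directions: `v` is a lattice
point, `b` is a basis of the lattice, `P` lies in the cone `v + cone(b)`, and `P` contains an
initial piece of each ray of it. -/
structure IsUnimodularCorner {n : ℕ} {κ : Type*} (P : Set (Fin n → ℝ)) (v : Fin n → ℝ)
    (b : Module.Basis κ ℝ (Fin n → ℝ)) : Prop where
  isLatticePt_apex : IsLatticePt v
  isLatticePt_apply : ∀ i, IsLatticePt (b i)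
  isInt_repr : ∀ x, IsLatticePt x → ∀ i, ∃ z : ℤ, b.repr x i = z
  repr_nonneg : ∀ x ∈ P, ∀ i, 0 ≤ b.repr (x - v) i
  exists_edge : ∀ i, ∃ ε : ℝ, 0 < ε ∧ v + ε • b i ∈ P

/-- A unimodular corner of `P` at `v` whose edge directions are indexed by the facet inequalities
that are tight at `v`, with the slacks of these as coordinates. -/
structure IsSlackCorner {n : ℕ} {ι : Type*} (P : Set (Fin n → ℝ))
    (slack : ι → (Fin n → ℝ) →ᵃ[ℝ] ℝ) (v : Fin n → ℝ)
    (b : Module.Basis {i // slack i v = 0} ℝ (Fin n → ℝ)) : Prop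
    extends IsUnimodularCorner P v b where
  slack_eq_repr : ∀ (i : {i // slack i v = 0}) x, slack i x = b.repr (x - v) i

/-- The facet inequalities `0 ≤ slack i x` of a smooth lattice polytope `P`, each normalized so that
`slack i` is the lattice distance to the facet `i`. -/
structure IsFacetSystem {n : ℕ} {ι : Type*} (P : Set (Fin n → ℝ))
    (slack : ι → (Fin n → ℝ) →ᵃ[ℝ] ℝ) : Prop where
  mem_iff : ∀ x, x ∈ P ↔ ∀ i, 0 ≤ slack i x
  isCompact : IsCompact P
  isInt_slack : ∀ x, IsLatticePt x → ∀ i, ∃ z : ℤ, slack i x = z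
  corner : ∀ v ∈ P.extremePoints ℝ, ∃ b, IsSlackCorner P slack v b

variable {n : ℕ} {ι : Type*} {P : Set (Fin n → ℝ)} {slack : ι → (Fin n → ℝ) →ᵃ[ℝ] ℝ}
  {s t : Finset ι} {v c x y : Fin n → ℝ} {i j k : ι}

/-- The affine subspace where the slacks in `s` vanish. -/
def flat (slack : ι → (Fin n → ℝ) →ᵃ[ℝ] ℝ) (s : Finset ι) : Set (Fin n → ℝ) :=
  {x | ∀ i ∈ s, slack i x = 0}

/-- The face of `P` (possibly empty) on which the facet inequalities in `s` are tight. -/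
def tightFace (P : Set (Fin n → ℝ)) (slack : ι → (Fin n → ℝ) →ᵃ[ℝ] ℝ) (s : Finset ι) :
    Set (Fin n → ℝ) :=
  P ∩ flat slack s

/-- The set of facet inequalities that are tight at `x`. -/
def activeSet [Fintype ι] (slack : ι → (Fin n → ℝ) →ᵃ[ℝ] ℝ) (x : Fin n → ℝ) : Finset ι :=
  {i | slack i x = 0}

lemma mem_activeSet [Fintype ι] : i ∈ activeSet slack x ↔ slack i x = 0 := by
  simp [activeSet]

lemma mem_flat_iff_subset_activeSet [Fintype ι] : x ∈ flat slack s ↔ s ⊆ activeSet slack x :=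
  forall₂_congr fun _ _ ↦ mem_activeSet.symm

lemma mem_flat_insert [DecidableEq ι] :
    x ∈ flat slack (insert j s) ↔ slack j x = 0 ∧ x ∈ flat slack s :=
  Finset.forall_mem_insert j s _

lemma tightFace_insert_subset [DecidableEq ι] :
    tightFace P slack (insert j s) ⊆ tightFace P slack s :=
  fun _ hx ↦ ⟨hx.1, (mem_flat_insert.1 hx.2).2⟩

lemma convex_flat : Convex ℝ (flat slack s) := by
  have hflat : flat slack s = ⋂ i ∈ s, slack i ⁻¹' {0} := by
    ext x
    simp [flat]
  rw [hflat]
  exact convex_iInter₂ fun i _ ↦ (convex_singleton 0).affine_preimage (slack i)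

lemma isClosed_flat : IsClosed (flat slack s) := by
  simp only [flat, Set.ofPred_forall]
  exact isClosed_biInter fun i _ ↦
    isClosed_eq (slack i).continuous_of_finiteDimensional continuous_const

lemma card_activeSet [Fintype ι] (b : Module.Basis {i // slack i v = 0} ℝ (Fin n → ℝ)) :
    (activeSet slack v).card = n := by
  rw [activeSet, ← Fintype.card_subtype, ← Module.finrank_eq_card_basis b, Module.finrank_fin_fun]

lemma exists_embedding_mem_range_iff [Finite ι]
    (b : Module.Basis {i // slack i v = 0} ℝ (Fin n → ℝ)) (hv : v ∈ flat slack s) {d : ℕ}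
    (hd : s.card + d = n) :
    ∃ e : Fin d ↪ {i // slack i v = 0}, ∀ i, i ∈ Set.range e ↔ (i : ι) ∉ s := by
  classical
  have : Fintype ι := Fintype.ofFinite ι
  have hs : (s.subtype fun i ↦ slack i v = 0).card = s.card := by
    rw [Finset.card_subtype, Finset.filter_true_of_mem hv]
  have hcard : (s.subtype fun i ↦ slack i v = 0)ᶜ.card = d := by
    rw [Finset.card_compl, hs, Fintype.card_subtype]
    exact Nat.sub_eq_of_eq_add ((card_activeSet b).trans (by omega))
  refine ⟨(Finset.equivFinOfCardEq hcard).symm.toEmbedding.trans (.subtype _), fun i ↦ ?_⟩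
  change i ∈ Set.range (Subtype.val ∘ (Finset.equivFinOfCardEq hcard).symm) ↔ _
  rw [EquivLike.range_comp]
  simp

lemma exists_embedding_eq_cons [DecidableEq ι] {d : ℕ} {e : Fin d ↪ {i // slack i v = 0}}
    (hjs : j ∉ s) (hjv : slack j v = 0) (he : ∀ i, i ∈ Set.range e ↔ (i : ι) ∉ insert j s) :
    ∃ e' : Fin (d + 1) ↪ {i // slack i v = 0},
      (e' : Fin (d + 1) → _) = Fin.cons ⟨j, hjv⟩ e ∧ ∀ i, i ∈ Set.range e' ↔ (i : ι) ∉ s := by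
  refine ⟨⟨Fin.cons ⟨j, hjv⟩ e, Fin.cons_injective_iff.2
    ⟨fun h ↦ (he _).1 h (Finset.mem_insert_self j s), e.injective⟩⟩, rfl, fun i ↦ ?_⟩
  change i ∈ Set.range (Fin.cons _ _) ↔ _
  rw [Fin.range_cons, Set.mem_insert_iff, he, Finset.mem_insert, Subtype.ext_iff]
  by_cases hij : (i : ι) = j <;> simp [hij, hjs]

namespace IsSlackCorner

variable {b : Module.Basis {i // slack i v = 0} ℝ (Fin n → ℝ)} {d : ℕ}
  {e : Fin d ↪ {i // slack i v = 0}}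

lemma eq_of_forall_slack_eq (hb : IsSlackCorner P slack v b)
    (h : ∀ i, slack i v = 0 → slack i x = slack i y) : x = y := by
  refine sub_left_injective (b := v) (b.ext_elem fun i ↦ ?_)
  change b.repr (x - v) i = b.repr (y - v) i
  rw [← hb.slack_eq_repr, ← hb.slack_eq_repr, h i i.2]

lemma mem_flat_iff_sub_mem_span (hb : IsSlackCorner P slack v b) (hv : v ∈ flat slack s) :
    x ∈ flat slack s ↔ x - v ∈ Submodule.span ℝ (b '' {i | (i : ι) ∉ s}) := by
  rw [Module.Basis.mem_span_image]
  constructor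
  · intro hx i hi his
    exact Finsupp.mem_support_iff.1 hi ((hb.slack_eq_repr i x).symm.trans (hx i his))
  · intro hx i his
    by_contra hne
    rw [hb.slack_eq_repr ⟨i, hv i his⟩] at hne
    exact hx (Finsupp.mem_support_iff.2 hne) his

lemma exists_edge_mem_tightFace (hb : IsSlackCorner P slack v b) (hv : v ∈ flat slack s)
    {i : {i // slack i v = 0}} (hi : (i : ι) ∉ s) :
    ∃ ε : ℝ, 0 < ε ∧ v + ε • b i ∈ tightFace P slack s := by
  obtain ⟨ε, hε, hmem⟩ := hb.exists_edge i
  refine ⟨ε, hε, hmem, (hb.mem_flat_iff_sub_mem_span hv).2 ?_⟩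
  rw [add_sub_cancel_left]
  exact Submodule.smul_mem _ ε (Submodule.subset_span ⟨i, hi, rfl⟩)

lemma affineSpan_tightFace (hb : IsSlackCorner P slack v b) (hv : v ∈ tightFace P slack s) :
    affineSpan ℝ (tightFace P slack s) =
      AffineSubspace.mk' v (Submodule.span ℝ (b '' {i | (i : ι) ∉ s})) := by
  have hvspan := mem_affineSpan ℝ hv
  refine le_antisymm (affineSpan_le.2 fun x hx ↦ ?_) ?_
  · exact AffineSubspace.mem_mk'.2 ((hb.mem_flat_iff_sub_mem_span hv.2).1 hx.2)
  · rw [← AffineSubspace.mk'_eq hvspan]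
    intro x hx
    rw [AffineSubspace.mem_mk'] at hx ⊢
    refine Submodule.span_le.2 ?_ hx
    rintro _ ⟨i, hi, rfl⟩
    obtain ⟨ε, hε, hmem⟩ := hb.exists_edge_mem_tightFace hv.2 hi
    have hdir := AffineSubspace.vsub_mem_direction (mem_affineSpan ℝ hmem) hvspan
    rw [vsub_eq_sub, add_sub_cancel_left] at hdir
    exact (Submodule.smul_mem_iff _ hε.ne').1 hdir

lemma coe_affineSpan_tightFace (hb : IsSlackCorner P slack v b) (hv : v ∈ tightFace P slack s) :
    (affineSpan ℝ (tightFace P slack s) : Set (Fin n → ℝ)) = flat slack s := by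
  ext x
  rw [hb.affineSpan_tightFace hv, SetLike.mem_coe, AffineSubspace.mem_mk', vsub_eq_sub,
    hb.mem_flat_iff_sub_mem_span hv.2]

lemma fdim_tightFace (hb : IsSlackCorner P slack v b) (hv : v ∈ tightFace P slack s)
    (he : ∀ i, i ∈ Set.range e ↔ (i : ι) ∉ s) : fdim (tightFace P slack s) = d := by
  have hrange : {i : {i // slack i v = 0} | (i : ι) ∉ s} = Set.range e :=
    Set.ext fun i ↦ (he i).symm
  rw [fdim, ← direction_affineSpan, hb.affineSpan_tightFace hv, AffineSubspace.direction_mk',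
    hrange, ← Set.range_comp, finrank_span_eq_card (b.linearIndependent.comp e e.injective),
    Fintype.card_fin]

end IsSlackCorner
end FacetSystems

section Charts

variable {n d : ℕ}

/-- `T` identifies the affine subspace `S` and its lattice with `ℝ^d` and `ℤ^d`, with inverse `σ`.
-/
structure IsUnimodularChart (S : Set (Fin n → ℝ)) (T : (Fin n → ℝ) →ᵃ[ℝ] (Fin d → ℝ))
    (σ : (Fin d → ℝ) →ᵃ[ℝ] (Fin n → ℝ)) : Prop where
  inv_mem : ∀ y, σ y ∈ S
  left_inv : ∀ x ∈ S, σ (T x) = x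
  right_inv : ∀ y, T (σ y) = y
  isLatticePt_apply : ∀ x, IsLatticePt x → IsLatticePt (T x)
  isLatticePt_inv : ∀ y, IsLatticePt y → IsLatticePt (σ y)

namespace IsUnimodularChart

variable {S A F : Set (Fin n → ℝ)} {T T' : (Fin n → ℝ) →ᵃ[ℝ] (Fin d → ℝ)}
  {σ : (Fin d → ℝ) →ᵃ[ℝ] (Fin n → ℝ)}

lemma injOn (h : IsUnimodularChart S T σ) : S.InjOn T :=
  Set.LeftInvOn.injOn h.left_inv

lemma image_lattice (h : IsUnimodularChart S T σ) :
    T '' (S ∩ {x | IsLatticePt x}) = {y | IsLatticePt y} := by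
  refine Set.Subset.antisymm ?_ fun y hy ↦
    ⟨σ y, ⟨h.inv_mem y, h.isLatticePt_inv y hy⟩, h.right_inv y⟩
  rintro _ ⟨x, ⟨-, hx⟩, rfl⟩
  exact h.isLatticePt_apply x hx

lemma image_lattice_inv (h : IsUnimodularChart S T σ) :
    σ '' {y | IsLatticePt y} = S ∩ {x | IsLatticePt x} := by
  rw [← h.image_lattice]
  exact Set.LeftInvOn.image_image (Set.LeftInvOn.mono h.left_inv Set.inter_subset_left)

lemma volume_image_eq (h : IsUnimodularChart S T σ)
    (hT' : T' '' (S ∩ {x | IsLatticePt x}) = {y | IsLatticePt y}) (hA : A ⊆ S) :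
    volume (T' '' A) = volume (T '' A) := by
  have hlattice : (T'.comp σ) '' {y | IsLatticePt y} = {y | IsLatticePt y} := by
    rw [AffineMap.coe_comp, Set.image_comp, h.image_lattice_inv, hT']
  rw [← volume_image_of_image_lattice hlattice (T '' A), AffineMap.coe_comp, Set.image_comp,
    Set.LeftInvOn.image_image (Set.LeftInvOn.mono h.left_inv hA)]

lemma eq_volume_image_of_hasRelVol (h : IsUnimodularChart (affineSpan ℝ F : Set (Fin n → ℝ)) T σ)
    {r : ℝ} (hr : HasRelVol F r) (hd : fdim F = d) : r = (volume (T '' F)).toReal := by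
  subst hd
  obtain ⟨T', -, hT', rfl⟩ := hr
  rw [h.volume_image_eq hT' (subset_affineSpan ℝ F)]

end IsUnimodularChart

variable {ι : Type*} {P : Set (Fin n → ℝ)} {slack : ι → (Fin n → ℝ) →ᵃ[ℝ] ℝ} {s : Finset ι}
  {v x : Fin n → ℝ} {b : Module.Basis {i // slack i v = 0} ℝ (Fin n → ℝ)}

/-- The slacks `e 0, …, e (d - 1)` as coordinates on a face of dimension `d`. -/
def slackChart (slack : ι → (Fin n → ℝ) →ᵃ[ℝ] ℝ) (e : Fin d → ι) :
    (Fin n → ℝ) →ᵃ[ℝ] (Fin d → ℝ) :=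
  AffineMap.pi fun k ↦ slack (e k)

/-- The parametrization `y ↦ v + ∑ k, y k • w k` of a face of dimension `d` by edge directions. -/
def edgeParam (v : Fin n → ℝ) (w : Fin d → Fin n → ℝ) : (Fin d → ℝ) →ᵃ[ℝ] (Fin n → ℝ) :=
  (Fintype.linearCombination ℝ w).toAffineMap + AffineMap.const ℝ _ v

lemma edgeParam_sub (w : Fin d → Fin n → ℝ) (y : Fin d → ℝ) :
    edgeParam v w y - v = ∑ k, y k • w k := by
  simp [edgeParam, Fintype.linearCombination_apply]

namespace IsSlackCorner

variable {e : Fin d ↪ {i // slack i v = 0}}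

lemma slack_edgeParam (hb : IsSlackCorner P slack v b) (y : Fin d → ℝ) (k : Fin d) :
    slack (e k) (edgeParam v (b ∘ e) y) = y k := by
  classical
  simp [hb.slack_eq_repr, edgeParam_sub, Finsupp.single_apply]

lemma edgeParam_mem_flat (hb : IsSlackCorner P slack v b) (hv : v ∈ flat slack s)
    (he : ∀ i, i ∈ Set.range e ↔ (i : ι) ∉ s) (y : Fin d → ℝ) :
    edgeParam v (b ∘ e) y ∈ flat slack s := by
  rw [hb.mem_flat_iff_sub_mem_span hv, edgeParam_sub]
  exact Submodule.sum_mem _ fun k _ ↦ Submodule.smul_mem _ _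
    (Submodule.subset_span ⟨e k, (he _).1 ⟨k, rfl⟩, rfl⟩)

lemma edgeParam_slackChart (hb : IsSlackCorner P slack v b) (hv : v ∈ flat slack s)
    (he : ∀ i, i ∈ Set.range e ↔ (i : ι) ∉ s) (hx : x ∈ flat slack s) :
    edgeParam v (b ∘ e) (slackChart slack (fun k ↦ e k) x) = x := by
  refine hb.eq_of_forall_slack_eq fun i hi ↦ ?_
  by_cases his : i ∈ s
  · rw [hb.edgeParam_mem_flat hv he _ i his, hx i his]
  · obtain ⟨k, hk⟩ := (he ⟨i, hi⟩).2 his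
    obtain rfl : (e k : ι) = i := congrArg Subtype.val hk
    rw [hb.slack_edgeParam]
    rfl

lemma isUnimodularChart (hb : IsSlackCorner P slack v b)
    (hint : ∀ x, IsLatticePt x → ∀ i, ∃ z : ℤ, slack i x = z) (hv : v ∈ flat slack s)
    (he : ∀ i, i ∈ Set.range e ↔ (i : ι) ∉ s) :
    IsUnimodularChart (flat slack s) (slackChart slack fun k ↦ e k) (edgeParam v (b ∘ e)) where
  inv_mem := hb.edgeParam_mem_flat hv he
  left_inv _ := hb.edgeParam_slackChart hv he
  right_inv y := funext (hb.slack_edgeParam y)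
  isLatticePt_apply x hx k := hint x hx (e k)
  isLatticePt_inv y hy := by
    rw [← sub_add_cancel (edgeParam v (b ∘ e) y) v, edgeParam_sub]
    refine (isLatticePt_sum _ fun k _ ↦ ?_).add hb.isLatticePt_apex
    obtain ⟨z, hz⟩ := hy k
    rw [hz]
    exact (hb.isLatticePt_apply (e k)).intCast_smul z

end IsSlackCorner
end Charts

section FacetSystems

variable {n : ℕ} {ι : Type*} {P : Set (Fin n → ℝ)} {slack : ι → (Fin n → ℝ) →ᵃ[ℝ] ℝ}
  {s : Finset ι}

lemma affineMap_sum_apply {E κ : Type*} [AddCommGroup E] [Module ℝ E] (s : Finset κ)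
    (f : κ → E →ᵃ[ℝ] ℝ) (x : E) : (∑ i ∈ s, f i) x = ∑ i ∈ s, f i x :=
  map_sum (⟨⟨fun g ↦ g x, rfl⟩, fun _ _ ↦ rfl⟩ : (E →ᵃ[ℝ] ℝ) →+ ℝ) f s

namespace IsFacetSystem

lemma slack_nonneg (H : IsFacetSystem P slack) {x : Fin n → ℝ} (hx : x ∈ P) (i : ι) :
    0 ≤ slack i x :=
  (H.mem_iff x).1 hx i

lemma convex (H : IsFacetSystem P slack) : Convex ℝ P := by
  have hP : P = ⋂ i, slack i ⁻¹' Set.Ici 0 := by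
    ext x
    simp [H.mem_iff]
  rw [hP]
  exact convex_iInter fun i ↦ (convex_Ici 0).affine_preimage (slack i)

lemma isCompact_tightFace (H : IsFacetSystem P slack) (s : Finset ι) :
    IsCompact (tightFace P slack s) :=
  H.isCompact.inter_right isClosed_flat

lemma tightFace_eq_setOf_sum_eq_zero (H : IsFacetSystem P slack) (s : Finset ι) :
    tightFace P slack s = {x ∈ P | (∑ i ∈ s, slack i) x = 0} := by
  ext x
  refine and_congr_right fun hx ↦ ?_
  rw [affineMap_sum_apply, Finset.sum_eq_zero_iff_of_nonneg fun i _ ↦ H.slack_nonneg hx i]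
  rfl

lemma sum_slack_nonneg (H : IsFacetSystem P slack) (s : Finset ι) {x : Fin n → ℝ} (hx : x ∈ P) :
    0 ≤ (∑ i ∈ s, slack i) x := by
  rw [affineMap_sum_apply]
  exact Finset.sum_nonneg fun i _ ↦ H.slack_nonneg hx i

lemma exists_vertex_mem_tightFace (H : IsFacetSystem P slack)
    (hne : (tightFace P slack s).Nonempty) :
    ∃ v ∈ P.extremePoints ℝ, v ∈ tightFace P slack s := by
  have hext : IsExtreme ℝ P (tightFace P slack s) := by
    rw [H.tightFace_eq_setOf_sum_eq_zero]
    exact isExtreme_setOf_affineMap_eq_zero fun x ↦ H.sum_slack_nonneg s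
  obtain ⟨v, hvs, hv⟩ := exists_mem_extremePoints_of_isExtreme hext (H.isCompact_tightFace s) hne
  exact ⟨v, hv, hvs⟩

lemma exists_ne_mem_tightFace [Finite ι] (H : IsFacetSystem P slack) {c : Fin n → ℝ}
    (hc : c ∈ P.extremePoints ℝ) (hcs : c ∈ flat slack s) (hs : s.card < n) :
    ∃ x ∈ tightFace P slack s, x ≠ c := by
  obtain ⟨b, hb⟩ := H.corner c hc
  obtain ⟨d, hd⟩ := Nat.exists_eq_add_of_lt hs
  obtain ⟨e, he⟩ := exists_embedding_mem_range_iff b hcs (d := d + 1) hd.symm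
  obtain ⟨ε, hε, hmem⟩ := hb.exists_edge_mem_tightFace hcs ((he _).1 ⟨0, rfl⟩)
  exact ⟨_, hmem, by simp [hε.ne', b.ne_zero]⟩

end IsFacetSystem
end FacetSystems

section PyramidDecomposition

variable {n d : ℕ} {ι : Type*} {P : Set (Fin n → ℝ)} {slack : ι → (Fin n → ℝ) →ᵃ[ℝ] ℝ}
  {s : Finset ι} {c x : Fin n → ℝ} {j k : ι} {T : (Fin n → ℝ) →ᵃ[ℝ] (Fin d → ℝ)}
  {σ : (Fin d → ℝ) →ᵃ[ℝ] (Fin n → ℝ)} {w : Finset ι → ℝ}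

/-- `w s` is the relative lattice volume of the face `tightFace P slack s`, and zero if the latter
is empty. -/
structure IsFaceVolume (P : Set (Fin n → ℝ)) (slack : ι → (Fin n → ℝ) →ᵃ[ℝ] ℝ)
    (w : Finset ι → ℝ) : Prop where
  hasRelVol : ∀ s, (tightFace P slack s).Nonempty → HasRelVol (tightFace P slack s) (w s)
  eq_zero : ∀ s, tightFace P slack s = ∅ → w s = 0

/-- The pyramid with apex `c` over the facet `tightFace P slack (insert j s)` of the face
`tightFace P slack s`. -/
def facePyramid [DecidableEq ι] (P : Set (Fin n → ℝ)) (slack : ι → (Fin n → ℝ) →ᵃ[ℝ] ℝ)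
    (s : Finset ι) (c : Fin n → ℝ) (j : ι) : Set (Fin n → ℝ) :=
  convexJoin ℝ {c} (tightFace P slack (insert j s))

lemma mem_facePyramid [DecidableEq ι] : x ∈ facePyramid P slack s c j ↔
    ∃ z ∈ tightFace P slack (insert j s), x ∈ segment ℝ c z := by
  simp [facePyramid, convexJoin_singleton_left]

namespace IsFacetSystem

lemma eq_volume_of_isUnimodularChart [Finite ι] (H : IsFacetSystem P slack)
    (hw : IsFaceVolume P slack w) (hT : IsUnimodularChart (flat slack s) T σ)
    (hd : s.card + d = n) (hne : (tightFace P slack s).Nonempty) :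
    w s = volume.real (T '' tightFace P slack s) := by
  obtain ⟨v, hv, hvs⟩ := H.exists_vertex_mem_tightFace hne
  obtain ⟨b, hb⟩ := H.corner v hv
  obtain ⟨e, he⟩ := exists_embedding_mem_range_iff b hvs.2 hd
  rw [← hb.coe_affineSpan_tightFace hvs] at hT
  exact hT.eq_volume_image_of_hasRelVol (hw.hasRelVol s hne) (hb.fdim_tightFace hvs he)

variable [DecidableEq ι]

lemma facePyramid_subset (H : IsFacetSystem P slack) (hc : c ∈ tightFace P slack s) :
    facePyramid P slack s c j ⊆ tightFace P slack s :=
  convexJoin_subset (Set.singleton_subset_iff.2 hc) tightFace_insert_subset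
    (H.convex.inter convex_flat)

lemma isCompact_facePyramid (H : IsFacetSystem P slack) : IsCompact (facePyramid P slack s c j) :=
  isCompact_convexJoin_singleton c (H.isCompact_tightFace _)

lemma exists_mem_tightFace_insert [Finite ι] (H : IsFacetSystem P slack)
    (hc : c ∈ tightFace P slack s) (hx : x ∈ tightFace P slack s) (hxc : x ≠ c) :
    ∃ j, slack j c ≠ 0 ∧ ∃ z ∈ tightFace P slack (insert j s), x ∈ segment ℝ c z := by
  obtain ⟨z, hz, j, hjc, hjz, hxz, hzero⟩ :=
    exists_mem_segment_slack_eq_zero H.mem_iff H.isCompact.isBounded hc.1 hx.1 hxc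
  exact ⟨j, hjc, z, ⟨hz, mem_flat_insert.2 ⟨hjz, fun i hi ↦ hzero i (hc.2 i hi) (hx.2 i hi)⟩⟩, hxz⟩

lemma tightFace_eq_biUnion_facePyramid [Fintype ι] (H : IsFacetSystem P slack)
    (hc : c ∈ P.extremePoints ℝ) (hcs : c ∈ flat slack s) (hs : s.card < n) :
    tightFace P slack s = ⋃ j ∈ (activeSet slack c)ᶜ, facePyramid P slack s c j := by
  have hcF : c ∈ tightFace P slack s := ⟨hc.1, hcs⟩
  refine Set.Subset.antisymm (fun x hx ↦ ?_) (Set.iUnion₂_subset fun j _ ↦ H.facePyramid_subset hcF)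
  simp only [Set.mem_iUnion, Finset.mem_compl, mem_activeSet, mem_facePyramid, exists_prop]
  rcases eq_or_ne x c with rfl | hxc
  · obtain ⟨y, hy, hyc⟩ := H.exists_ne_mem_tightFace hc hcs hs
    obtain ⟨j, hj, z, hz, -⟩ := H.exists_mem_tightFace_insert hcF hy hyc
    exact ⟨j, hj, z, hz, left_mem_segment ℝ x z⟩
  · exact H.exists_mem_tightFace_insert hcF hx hxc

lemma slack_mul_eq_of_mem_facePyramid_inter (H : IsFacetSystem P slack) (hc : c ∈ P)
    (hj : slack j c ≠ 0) (hk : slack k c ≠ 0)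
    (hx : x ∈ facePyramid P slack s c j ∩ facePyramid P slack s c k) :
    slack j x * slack k c = slack k x * slack j c := by
  obtain ⟨z, hz, hxz⟩ := mem_facePyramid.1 hx.1
  obtain ⟨z', hz', hxz'⟩ := mem_facePyramid.1 hx.2
  exact affineMap_mul_eq_of_mem_segment ((H.slack_nonneg hc j).lt_of_ne' hj)
    ((H.slack_nonneg hc k).lt_of_ne' hk) (mem_flat_insert.1 hz.2).1 (H.slack_nonneg hz.1 k)
    (H.slack_nonneg hz'.1 j) (mem_flat_insert.1 hz'.2).1 hxz hxz'

lemma facePyramid_inter_subset_singleton (H : IsFacetSystem P slack) (hc : c ∈ P)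
    (hj : slack j c ≠ 0) (hk : slack k c ≠ 0)
    (hempty : ¬ (tightFace P slack (insert k (insert j s))).Nonempty) :
    facePyramid P slack s c j ∩ facePyramid P slack s c k ⊆ {c} := by
  intro x hx
  by_contra hxc
  obtain ⟨z, hz, hxz⟩ := mem_facePyramid.1 hx.1
  refine hempty ⟨z, hz.1, mem_flat_insert.2 ⟨?_, hz.2⟩⟩
  exact affineMap_eq_zero_of_mem_segment hj (mem_flat_insert.1 hz.2).1 hxz hxc
    (H.slack_mul_eq_of_mem_facePyramid_inter hc hj hk hx)

lemma volume_image_facePyramid_inter [Finite ι] (H : IsFacetSystem P slack)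
    (hT : IsUnimodularChart (flat slack s) T σ) (hd : s.card + d = n) (hd₀ : d ≠ 0)
    (hc : c ∈ tightFace P slack s) (hj : slack j c ≠ 0) (hk : slack k c ≠ 0) (hjk : j ≠ k) :
    volume (T '' (facePyramid P slack s c j ∩ facePyramid P slack s c k)) = 0 := by
  by_cases hne : (tightFace P slack (insert k (insert j s))).Nonempty
  · obtain ⟨v, hv, hvs⟩ := H.exists_vertex_mem_tightFace hne
    obtain ⟨b, hb⟩ := H.corner v hv
    obtain ⟨hkv, hjv, hvs'⟩ := (mem_flat_insert.1 hvs.2).imp_right mem_flat_insert.1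
    obtain ⟨e, he⟩ := exists_embedding_mem_range_iff b hvs' hd
    obtain ⟨p, hp⟩ := (he ⟨j, hjv⟩).2 fun hjs ↦ hj (hc.2 j hjs)
    obtain ⟨q, hq⟩ := (he ⟨k, hkv⟩).2 fun hks ↦ hk (hc.2 k hks)
    have hpq : p ≠ q := by
      rintro rfl
      exact hjk (congrArg Subtype.val (hp.symm.trans hq))
    rw [(hb.isUnimodularChart H.isInt_slack hvs' he).volume_image_eq hT.image_lattice
      (Set.inter_subset_left.trans ((H.facePyramid_subset hc).trans Set.inter_subset_right))]
    refine measure_mono_null ?_ (volume_setOf_mul_eq_mul hpq hk (slack j c))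
    rintro _ ⟨x, hx, rfl⟩
    have hcoord := H.slack_mul_eq_of_mem_facePyramid_inter hc.1 hj hk hx
    simpa [slackChart, hp, hq] using hcoord
  · have : NeZero d := ⟨hd₀⟩
    refine measure_mono_null (Set.image_mono
      (H.facePyramid_inter_subset_singleton hc.1 hj hk hne)) ?_
    rw [Set.image_singleton, measure_singleton]

lemma measureReal_image_facePyramid [Finite ι] (H : IsFacetSystem P slack)
    (hw : IsFaceVolume P slack w) {T : (Fin n → ℝ) →ᵃ[ℝ] (Fin (d + 1) → ℝ)}
    {σ : (Fin (d + 1) → ℝ) →ᵃ[ℝ] (Fin n → ℝ)} (hT : IsUnimodularChart (flat slack s) T σ)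
    (hd : s.card + (d + 1) = n) (hc : c ∈ tightFace P slack s) (hj : slack j c ≠ 0) :
    volume.real (T '' facePyramid P slack s c j) = slack j c / (d + 1) * w (insert j s) := by
  rcases (tightFace P slack (insert j s)).eq_empty_or_nonempty with hempty | hne
  · simp [facePyramid, hempty, hw.eq_zero]
  obtain ⟨v, hv, hvs⟩ := H.exists_vertex_mem_tightFace hne
  obtain ⟨b, hb⟩ := H.corner v hv
  have hjs : j ∉ s := fun h ↦ hj (hc.2 j h)
  have hd' : (insert j s).card + d = n := by
    rw [Finset.card_insert_of_notMem hjs]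
    omega
  obtain ⟨e, he⟩ := exists_embedding_mem_range_iff b hvs.2 hd'
  obtain ⟨hjv, hvs'⟩ := mem_flat_insert.1 hvs.2
  obtain ⟨e', hcons, he'⟩ := exists_embedding_eq_cons hjs hjv he
  have hchart (x : Fin n → ℝ) : slackChart slack (fun k ↦ e' k) x =
      Fin.cons (slack j x) (slackChart slack (fun k ↦ e k) x) :=
    funext (Fin.cases (by simp [slackChart, hcons]) fun _ ↦ by simp [slackChart, hcons])
  have hfacet : slackChart slack (fun k ↦ e' k) '' tightFace P slack (insert j s) =
      Fin.cons 0 '' (slackChart slack (fun k ↦ e k) '' tightFace P slack (insert j s)) := by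
    rw [Set.image_image]
    exact Set.image_congr fun x hx ↦ by rw [hchart, (mem_flat_insert.1 hx.2).1]
  have hpos : 0 < slackChart slack (fun k ↦ e' k) c 0 := by
    rw [hchart]
    exact (H.slack_nonneg hc.1 j).lt_of_ne' hj
  rw [measureReal_def, (hb.isUnimodularChart H.isInt_slack hvs' he').volume_image_eq
    hT.image_lattice ((H.facePyramid_subset hc).trans Set.inter_subset_right), facePyramid,
    image_convexJoin_singleton, hfacet, volume_convexJoin_cons_zero hpos
    ((H.isCompact_tightFace _).image (slackChart slack _).continuous_of_finiteDimensional),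
    ENNReal.toReal_mul, ENNReal.toReal_ofReal (by positivity), ← measureReal_def,
    H.eq_volume_of_isUnimodularChart hw (hb.isUnimodularChart H.isInt_slack hvs.2 he) hd' hne,
    hchart, Fin.cons_zero]

theorem mul_faceVolume_eq_sum [Fintype ι] (H : IsFacetSystem P slack)
    (hw : IsFaceVolume P slack w) (hc : c ∈ P.extremePoints ℝ) (hcs : c ∈ flat slack s)
    (hd : s.card + (d + 1) = n) :
    (d + 1) * w s = ∑ j ∈ (activeSet slack c)ᶜ, slack j c * w (insert j s) := by
  have hcF : c ∈ tightFace P slack s := ⟨hc.1, hcs⟩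
  obtain ⟨b, hb⟩ := H.corner c hc
  obtain ⟨e, he⟩ := exists_embedding_mem_range_iff b hcs hd
  have hchart := hb.isUnimodularChart H.isInt_slack hcs he
  have hcompact (j : ι) :
      IsCompact (slackChart slack (fun k ↦ e k) '' facePyramid P slack s c j) :=
    H.isCompact_facePyramid.image (slackChart slack _).continuous_of_finiteDimensional
  have hsub (j : ι) : facePyramid P slack s c j ⊆ flat slack s :=
    (H.facePyramid_subset hcF).trans Set.inter_subset_right
  have hdisjoint : ((activeSet slack c)ᶜ : Set ι).Pairwise (Function.onFun (AEDisjoint volume)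
      fun j ↦ slackChart slack (fun k ↦ e k) '' facePyramid P slack s c j) := by
    intro j hj k hk hjk
    rw [Function.onFun, AEDisjoint, ← hchart.injOn.image_inter (hsub j) (hsub k)]
    exact H.volume_image_facePyramid_inter hchart hd d.succ_ne_zero hcF
      (fun h ↦ hj (mem_activeSet.2 h)) (fun h ↦ hk (mem_activeSet.2 h)) hjk
  rw [H.eq_volume_of_isUnimodularChart hw hchart hd ⟨c, hcF⟩,
    H.tightFace_eq_biUnion_facePyramid hc hcs (by omega), Set.image_iUnion₂,
    measureReal_biUnion_finset₀ (by rwa [Finset.coe_compl])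
      (fun j _ ↦ (hcompact j).measurableSet.nullMeasurableSet)
      (fun j _ ↦ (hcompact j).measure_ne_top), Finset.mul_sum]
  refine Finset.sum_congr rfl fun j hj ↦ ?_
  rw [H.measureReal_image_facePyramid hw hchart hd hcF
    fun h ↦ Finset.mem_compl.1 hj (mem_activeSet.2 h)]
  field_simp

end IsFacetSystem
end PyramidDecomposition

section FaceSum

variable {n : ℕ} {ι : Type*} {P F : Set (Fin n → ℝ)} {slack : ι → (Fin n → ℝ) →ᵃ[ℝ] ℝ}
  {s t : Finset ι}

lemma IsFace.isExtreme (hF : IsFace P F) : IsExtreme ℝ P F := by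
  obtain ⟨-, u, c, hu, rfl⟩ := hF
  let f : (Fin n → ℝ) →ᵃ[ℝ] ℝ := u.toAffineMap - AffineMap.const ℝ _ c
  have hext : IsExtreme ℝ P {x ∈ P | u x - c = 0} :=
    isExtreme_setOf_affineMap_eq_zero (f := f) fun x hx ↦ sub_nonneg.2 (hu x hx)
  simpa only [sub_eq_zero] using hext

lemma IsFace.isCompact (hF : IsFace P F) (hP : IsCompact P) : IsCompact F := by
  obtain ⟨-, u, c, -, rfl⟩ := hF
  exact hP.inter_right (isClosed_eq u.continuous_of_finiteDimensional continuous_const)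

lemma linearMap_apply_eq_sum_repr_mul {E κ : Type*} [AddCommGroup E] [Module ℝ E] [Fintype κ]
    (b : Module.Basis κ ℝ E) (u : E →ₗ[ℝ] ℝ) (x : E) : u x = ∑ i, b.repr x i * u (b i) := by
  conv_lhs => rw [← b.sum_repr x, map_sum]
  simp only [map_smul, smul_eq_mul]

lemma IsUnimodularCorner.apply_nonneg {κ : Type*} {v : Fin n → ℝ}
    {b : Module.Basis κ ℝ (Fin n → ℝ)} (hb : IsUnimodularCorner P v b)
    {u : (Fin n → ℝ) →ₗ[ℝ] ℝ} (hu : ∀ x ∈ P, u v ≤ u x) (i : κ) : 0 ≤ u (b i) := by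
  obtain ⟨ε, hε, hmem⟩ := hb.exists_edge i
  have hle := hu _ hmem
  rw [map_add, map_smul, smul_eq_mul, le_add_iff_nonneg_right] at hle
  exact nonneg_of_mul_nonneg_right hle hε

namespace IsFacetSystem

lemma isFace_tightFace (H : IsFacetSystem P slack) (hne : (tightFace P slack s).Nonempty) :
    IsFace P (tightFace P slack s) := by
  have hdecomp (x : Fin n → ℝ) :
      (∑ i ∈ s, slack i) x = (∑ i ∈ s, slack i).linear x + (∑ i ∈ s, slack i) 0 :=
    congrFun (∑ i ∈ s, slack i).decomp x
  refine ⟨hne, (∑ i ∈ s, slack i).linear, -(∑ i ∈ s, slack i) 0, fun x hx ↦ ?_, ?_⟩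
  · rw [neg_le_iff_add_nonneg, ← hdecomp]
    exact H.sum_slack_nonneg s hx
  · simp only [H.tightFace_eq_setOf_sum_eq_zero, eq_neg_iff_add_eq_zero, ← hdecomp]

lemma exists_eq_tightFace [Finite ι] (H : IsFacetSystem P slack) (hF : IsFace P F) :
    ∃ s, F = tightFace P slack s := by
  classical
  have : Fintype ι := Fintype.ofFinite ι
  obtain ⟨v, hvF, hv⟩ :=
    exists_mem_extremePoints_of_isExtreme hF.isExtreme (hF.isCompact H.isCompact) hF.1
  obtain ⟨b, hb⟩ := H.corner v hv
  obtain ⟨-, u, c, hu, rfl⟩ := hF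
  obtain rfl : u v = c := hvF.2
  have hu_nonneg := hb.apply_nonneg hu
  have hu_eq (x : Fin n → ℝ) : u x - u v = ∑ i : {i // slack i v = 0}, slack i x * u (b i) := by
    rw [← map_sub, linearMap_apply_eq_sum_repr_mul b]
    simp only [hb.slack_eq_repr]
  refine ⟨({i | ∃ h : slack i v = 0, u (b ⟨i, h⟩) ≠ 0} : Finset ι),
    Set.ext fun x ↦ and_congr_right fun hx ↦ ?_⟩
  rw [← sub_eq_zero, hu_eq, Finset.sum_eq_zero_iff_of_nonneg fun (i : {i // slack i v = 0}) _ ↦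
    mul_nonneg (H.slack_nonneg hx i) (hu_nonneg i)]
  simp only [Finset.mem_univ, true_imp_iff, mul_eq_zero, Subtype.forall, flat,
    Finset.mem_filter_univ, forall_exists_index, Set.mem_ofPred_eq, or_iff_not_imp_right, ne_eq]

lemma subset_of_tightFace_subset (H : IsFacetSystem P slack)
    (hne : (tightFace P slack s).Nonempty) (hst : tightFace P slack s ⊆ tightFace P slack t) :
    t ⊆ s := by
  intro i hit
  obtain ⟨v, hv, hvs⟩ := H.exists_vertex_mem_tightFace hne
  obtain ⟨b, hb⟩ := H.corner v hv
  have hiv : slack i v = 0 := (hst hvs).2 i hit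
  by_contra his
  obtain ⟨ε, hε, hmem⟩ := hb.exists_edge_mem_tightFace hvs.2 (i := ⟨i, hiv⟩) his
  have hzero := (hst hmem).2 i hit
  rw [hb.slack_eq_repr ⟨i, hiv⟩] at hzero
  simp [hε.ne'] at hzero

lemma exists_vertex_subset_activeSet_iff [Fintype ι] (H : IsFacetSystem P slack) :
    (∃ v : P.extremePoints ℝ, s ⊆ activeSet slack v) ↔ (tightFace P slack s).Nonempty := by
  constructor
  · rintro ⟨⟨v, hv⟩, hs⟩
    exact ⟨v, hv.1, mem_flat_iff_subset_activeSet.2 hs⟩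
  · intro hne
    obtain ⟨v, hv, hvs⟩ := H.exists_vertex_mem_tightFace hne
    exact ⟨⟨v, hv⟩, mem_flat_iff_subset_activeSet.1 hvs.2⟩

lemma card_le_of_tightFace_nonempty [Finite ι] (H : IsFacetSystem P slack)
    (hne : (tightFace P slack s).Nonempty) : s.card ≤ n := by
  have : Fintype ι := Fintype.ofFinite ι
  obtain ⟨⟨v, hv⟩, hs⟩ := H.exists_vertex_subset_activeSet_iff.2 hne
  obtain ⟨b, -⟩ := H.corner v hv
  exact (Finset.card_le_card hs).trans_eq (card_activeSet b)

lemma fdim_tightFace [Finite ι] (H : IsFacetSystem P slack)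
    (hne : (tightFace P slack s).Nonempty) : fdim (tightFace P slack s) = n - s.card := by
  obtain ⟨v, hv, hvs⟩ := H.exists_vertex_mem_tightFace hne
  obtain ⟨b, hb⟩ := H.corner v hv
  obtain ⟨e, he⟩ := exists_embedding_mem_range_iff b hvs.2
    (Nat.add_sub_of_le (H.card_le_of_tightFace_nonempty hne))
  exact hb.fdim_tightFace hvs he

lemma one_le_slack (H : IsFacetSystem P slack) {c : Fin n → ℝ} (hc : c ∈ P.extremePoints ℝ)
    {j : ι} (hj : slack j c ≠ 0) : 1 ≤ slack j c := by
  obtain ⟨b, hb⟩ := H.corner c hc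
  obtain ⟨z, hz⟩ := H.isInt_slack c hb.isLatticePt_apex j
  have hpos : 0 < slack j c := (H.slack_nonneg hc.1 j).lt_of_ne' hj
  rw [hz] at hpos ⊢
  exact_mod_cast hpos

lemma exists_vertex_activeSet_ne [Fintype ι] (H : IsFacetSystem P slack) {c : Fin n → ℝ}
    (hc : c ∈ P.extremePoints ℝ) (hs : s ⊆ activeSet slack c) (hsn : s.card < n) :
    ∃ v : P.extremePoints ℝ, s ⊆ activeSet slack v ∧ activeSet slack v ≠ activeSet slack c := by
  classical
  have hcs := mem_flat_iff_subset_activeSet.2 hs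
  obtain ⟨y, hy, hyc⟩ := H.exists_ne_mem_tightFace hc hcs hsn
  obtain ⟨j, hjc, z, hz, -⟩ := H.exists_mem_tightFace_insert ⟨hc.1, hcs⟩ hy hyc
  obtain ⟨v, hv⟩ := H.exists_vertex_subset_activeSet_iff.2 ⟨z, hz⟩
  rw [Finset.insert_subset_iff] at hv
  exact ⟨v, hv.2, fun h ↦ hjc (mem_activeSet.1 (h ▸ hv.1))⟩

lemma isPyramidSystem [Fintype ι] [DecidableEq ι] (H : IsFacetSystem P slack)
    {w : Finset ι → ℝ} (hw : IsFaceVolume P slack w) :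
    IsPyramidSystem n (fun v : P.extremePoints ℝ ↦ activeSet slack v) (fun v j ↦ slack j v)
      fun s ↦ (n - s.card).factorial * w s where
  card_vert v := (H.corner v v.2).elim fun b _ ↦ card_activeSet b
  nonneg s := by
    refine mul_nonneg (Nat.cast_nonneg _) ?_
    rcases (tightFace P slack s).eq_empty_or_nonempty with hempty | hne
    · exact (hw.eq_zero s hempty).ge
    · obtain ⟨T, -, -, hT⟩ := hw.hasRelVol s hne
      exact hT ▸ ENNReal.toReal_nonneg
  one_le_height v j hj := H.one_le_slack v.2 fun h ↦ hj (mem_activeSet.2 h)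
  pyramid v s hs hsn := by
    obtain ⟨d, hd⟩ := Nat.exists_eq_add_of_lt hsn
    have hrec := H.mul_faceVolume_eq_sum hw v.2 (mem_flat_iff_subset_activeSet.2 hs) (d := d)
      hd.symm
    have hcard : n - s.card = d + 1 := by omega
    calc ((n - s.card).factorial : ℝ) * w s = d.factorial * ((d + 1) * w s) := by
          rw [hcard, Nat.factorial_succ]
          push_cast
          ring
      _ = _ := by
          rw [hrec, Finset.mul_sum]
          refine Finset.sum_congr rfl fun j hj ↦ ?_
          have hjs : j ∉ s := fun h ↦ Finset.mem_compl.1 hj (hs h)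
          rw [Finset.card_insert_of_notMem hjs, Nat.sub_add_eq, hcard, Nat.add_sub_cancel]
          ring
  eq_zero s hs := by
    rw [H.exists_vertex_subset_activeSet_iff, Set.not_nonempty_iff_eq_empty] at hs
    rw [hw.eq_zero s hs, mul_zero]
  exists_vert_ne v _ hs hsn := H.exists_vertex_activeSet_ne v.2 hs hsn

theorem faceSum_eq_sum [Fintype ι] (H : IsFacetSystem P slack) {w : Finset ι → ℝ}
    (hw : IsFaceVolume P slack w) {𝓕 : Finset (Set (Fin n → ℝ))} (h𝓕 : ∀ F, F ∈ 𝓕 ↔ IsFace P F)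
    {volf : Set (Fin n → ℝ) → ℝ}
    (hvolf : ∀ s, (tightFace P slack s).Nonempty → w s = volf (tightFace P slack s)) :
    faceSum 𝓕 volf = ∑ s : Finset ι, (-1) ^ s.card * (((n : ℝ) + 1 - s.card) *
      ((n - s.card).factorial * w s)) := by
  classical
  have himage : 𝓕 = ({s | (tightFace P slack s).Nonempty} : Finset (Finset ι)).image
      (tightFace P slack) := by
    ext F
    rw [h𝓕, Finset.mem_image]
    constructor
    · intro hF
      obtain ⟨s, rfl⟩ := H.exists_eq_tightFace hF
      exact ⟨s, Finset.mem_filter_univ s |>.2 hF.1, rfl⟩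
    · rintro ⟨s, hs, rfl⟩
      exact H.isFace_tightFace (Finset.mem_filter_univ s |>.1 hs)
  have hinj : Set.InjOn (tightFace P slack)
      ({s | (tightFace P slack s).Nonempty} : Finset (Finset ι)) := fun s hs t ht hst ↦
    (H.subset_of_tightFace_subset (Finset.mem_filter_univ t |>.1 ht) hst.ge).antisymm
      (H.subset_of_tightFace_subset (Finset.mem_filter_univ s |>.1 hs) hst.le)
  rw [faceSum, himage, Finset.sum_image hinj, Finset.sum_filter]
  refine Finset.sum_congr rfl fun s _ ↦ ?_
  split_ifs with hne
  · have hle := H.card_le_of_tightFace_nonempty hne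
    rw [H.fdim_tightFace hne, Nat.sub_sub_self hle, Nat.factorial_succ, ← hvolf s hne]
    push_cast [hle]
    ring
  · rw [hw.eq_zero s (Set.not_nonempty_iff_eq_empty.1 hne), mul_zero, mul_zero, mul_zero]

theorem faceSum_nonneg [Finite ι] (H : IsFacetSystem P slack)
    {𝓕 : Finset (Set (Fin n → ℝ))} {volf : Set (Fin n → ℝ) → ℝ} (h𝓕 : ∀ F, F ∈ 𝓕 ↔ IsFace P F)
    (hvolf : ∀ F ∈ 𝓕, HasRelVol F (volf F)) : 0 ≤ faceSum 𝓕 volf := by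
  classical
  have : Fintype ι := Fintype.ofFinite ι
  let w (s : Finset ι) : ℝ :=
    if (tightFace P slack s).Nonempty then volf (tightFace P slack s) else 0
  have hw_eq : ∀ s, (tightFace P slack s).Nonempty → w s = volf (tightFace P slack s) :=
    fun s hne ↦ if_pos hne
  have hw : IsFaceVolume P slack w :=
    { hasRelVol s hne := by
        rw [hw_eq s hne]
        exact hvolf _ ((h𝓕 _).2 (H.isFace_tightFace hne))
      eq_zero s hempty := if_neg (Set.not_nonempty_iff_eq_empty.2 hempty) }
  rw [H.faceSum_eq_sum hw h𝓕 hw_eq]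
  exact (H.isPyramidSystem hw).sum_nonneg

end IsFacetSystem
end FaceSum

section VertexFigures

lemma notMem_convexHull_diff_of_mem_extremePoints {E : Type*} [AddCommGroup E] [Module ℝ E]
    {X : Set E} {e : E} (he : e ∈ (convexHull ℝ X).extremePoints ℝ) :
    e ∉ convexHull ℝ (X \ {e}) := fun hmem ↦
  (convexHull_min (Set.sdiff_subset_sdiff_left (subset_convexHull ℝ X))
    ((convex_convexHull ℝ X).mem_extremePoints_iff_convex_sdiff.1 he).2 hmem).2 rfl

lemma exists_linearMap_lt_of_mem_extremePoints {E : Type*} [NormedAddCommGroup E]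
    [NormedSpace ℝ E] {X : Set E} (hX : X.Finite) {e : E}
    (he : e ∈ (convexHull ℝ X).extremePoints ℝ) :
    ∃ u : E →ₗ[ℝ] ℝ, ∀ x ∈ X, x ≠ e → u e < u x := by
  obtain ⟨u, c, huc, hcu⟩ := geometric_hahn_banach_point_closed (convex_convexHull ℝ (X \ {e}))
    (hX.sdiff.isCompact_convexHull ℝ).isClosed (notMem_convexHull_diff_of_mem_extremePoints he)
  exact ⟨u, fun x hx hxe ↦ huc.trans (hcu x (subset_convexHull ℝ _ ⟨hx, hxe⟩))⟩

lemma convex_setOf_le_and_imp_mem {E : Type*} [AddCommGroup E] [Module ℝ E] (u : E →ₗ[ℝ] ℝ)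
    (c : ℝ) {K : Set E} (hK : Convex ℝ K) : Convex ℝ {x | c ≤ u x ∧ (u x = c → x ∈ K)} := by
  rw [convex_iff_forall_pos]
  rintro x ⟨hx, hxK⟩ y ⟨hy, hyK⟩ p q hp hq hpq
  have hexp : u (p • x + q • y) = p * u x + q * u y := by simp
  have hpx := mul_le_mul_of_nonneg_left hx hp.le
  have hqy := mul_le_mul_of_nonneg_left hy hq.le
  have hc : p * c + q * c = c := by rw [← add_mul, hpq, one_mul]
  refine ⟨by linarith, fun h ↦ hK (hxK ?_) (hyK ?_) hp.le hq.le hpq⟩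
  · exact mul_left_cancel₀ hp.ne' (by linarith)
  · exact mul_left_cancel₀ hq.ne' (by linarith)

/-- The vertex figure at `v` of the polytope with vertex set `V`: the rays from `v` to the other
vertices, translated to the origin and cut with the hyperplane `u = 1`. Here `u` is meant to be
minimized over `V` at `v` only. -/
def vertexFigure {E : Type*} [AddCommGroup E] [Module ℝ E] (u : E →ₗ[ℝ] ℝ) (V : Set E) (v : E) :
    Set E :=
  (fun x ↦ (u (x - v))⁻¹ • (x - v)) '' (V \ {v})

section

variable {E : Type*} [AddCommGroup E] [Module ℝ E] {u : E →ₗ[ℝ] ℝ} {V : Set E} {v x y : E}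

lemma finite_vertexFigure (hV : V.Finite) : (vertexFigure u V v).Finite := hV.sdiff.image _

lemma exists_mem_vertexFigure_eq_add_smul (hu : ∀ x ∈ V, x ≠ v → u v < u x) (hx : x ∈ V)
    (hxv : x ≠ v) : ∃ y ∈ vertexFigure u V v, ∃ p : ℝ, 0 < p ∧ x = v + p • y := by
  have hpos : 0 < u (x - v) := by
    rw [map_sub]
    exact sub_pos.2 (hu x hx hxv)
  exact ⟨_, ⟨x, ⟨hx, hxv⟩, rfl⟩, u (x - v), hpos, by rw [smul_inv_smul₀ hpos.ne', add_sub_cancel]⟩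

lemma exists_add_smul_mem_of_mem_vertexFigure (hu : ∀ x ∈ V, x ≠ v → u v < u x)
    (hy : y ∈ vertexFigure u V v) : u y = 1 ∧ ∃ p : ℝ, 0 < p ∧ v + p • y ∈ V := by
  obtain ⟨x, ⟨hx, hxv⟩, rfl⟩ := hy
  have hpos : 0 < u (x - v) := by
    rw [map_sub]
    exact sub_pos.2 (hu x hx hxv)
  refine ⟨?_, u (x - v), hpos, by rwa [smul_inv_smul₀ hpos.ne', add_sub_cancel]⟩
  rw [map_smul, smul_eq_mul, inv_mul_cancel₀ hpos.ne']

end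

variable {n : ℕ} {V F : Set (Fin n → ℝ)} {u : (Fin n → ℝ) →ₗ[ℝ] ℝ} {v e : Fin n → ℝ}

lemma fdim_eq_one (hF : F ⊆ AffineSubspace.mk' v (Submodule.span ℝ {e})) (hv : v ∈ F) {ε : ℝ}
    (hε : ε ≠ 0) (he : e ≠ 0) (hmem : v + ε • e ∈ F) : fdim F = 1 := by
  have hspan : vectorSpan ℝ F = Submodule.span ℝ {e} := by
    refine le_antisymm ?_ ?_
    · rw [← direction_affineSpan, ← AffineSubspace.direction_mk' v (Submodule.span ℝ {e})]
      exact AffineSubspace.direction_le (affineSpan_le.2 hF)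
    · rw [Submodule.span_singleton_le_iff_mem]
      have hsub := vsub_mem_vectorSpan ℝ hmem hv
      rw [vsub_eq_sub, add_sub_cancel_left] at hsub
      exact (Submodule.smul_mem_iff _ hε).1 hsub
  rw [fdim, hspan, finrank_span_singleton he]

lemma exists_edge_of_mem_extremePoints_vertexFigure (hV : V.Finite) (hvV : v ∈ V)
    (hu : ∀ x ∈ V, x ≠ v → u v < u x)
    (he : e ∈ (convexHull ℝ (vertexFigure u V v)).extremePoints ℝ) :
    ∃ F, IsFace (convexHull ℝ V) F ∧ v ∈ F ∧ fdim F = 1 ∧ ∃ ε : ℝ, 0 < ε ∧ v + ε • e ∈ F := by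
  obtain ⟨g, hg⟩ := exists_linearMap_lt_of_mem_extremePoints (finite_vertexFigure hV) he
  obtain ⟨hue, ε, hε, hεe⟩ :=
    exists_add_smul_mem_of_mem_vertexFigure hu (extremePoints_convexHull_subset he)
  let U : (Fin n → ℝ) →ₗ[ℝ] ℝ := g - g e • u
  let K := AffineSubspace.mk' v (Submodule.span ℝ {e})
  have hU (p : ℝ) {y : Fin n → ℝ} (hy : y ∈ vertexFigure u V v) :
      U (v + p • y) = U v + p * (g y - g e) := by
    simp [U, (exists_add_smul_mem_of_mem_vertexFigure hu hy).1]
    ring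
  have hmemK (p : ℝ) : v + p • e ∈ K := by
    rw [AffineSubspace.mem_mk', vsub_eq_sub, add_sub_cancel_left]
    exact Submodule.smul_mem _ p (Submodule.mem_span_singleton_self e)
  have hVU : ∀ x ∈ V, U v ≤ U x ∧ (U x = U v → x ∈ K) := by
    intro x hx
    rcases eq_or_ne x v with rfl | hxv
    · exact ⟨le_rfl, fun _ ↦ AffineSubspace.self_mem_mk' x _⟩
    obtain ⟨y, hy, p, hp, rfl⟩ := exists_mem_vertexFigure_eq_add_smul hu hx hxv
    rw [hU p hy]
    rcases eq_or_ne y e with rfl | hye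
    · exact ⟨by simp, fun _ ↦ hmemK p⟩
    · have hpos := mul_pos hp (sub_pos.2 (hg y hy hye))
      exact ⟨by linarith, fun h ↦ by linarith⟩
  have hPU : ∀ x ∈ convexHull ℝ V, U v ≤ U x ∧ (U x = U v → x ∈ K) :=
    convexHull_min hVU (convex_setOf_le_and_imp_mem U (U v) K.convex)
  have hvP := subset_convexHull ℝ V hvV
  have hmem : v + ε • e ∈ {x ∈ convexHull ℝ V | U x = U v} :=
    ⟨subset_convexHull ℝ V hεe, by simp [hU ε (extremePoints_convexHull_subset he)]⟩
  exact ⟨{x ∈ convexHull ℝ V | U x = U v}, ⟨⟨v, hvP, rfl⟩, U, U v, fun x hx ↦ (hPU x hx).1, rfl⟩,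
    ⟨hvP, rfl⟩, fdim_eq_one (fun x hx ↦ (hPU x hx.1).2 hx.2) ⟨hvP, rfl⟩ hε.ne'
      (fun h ↦ by simp [h] at hue) hmem, ε, hε, hmem⟩

lemma le_of_forall_edge (hV : V.Finite) (hv : v ∈ (convexHull ℝ V).extremePoints ℝ)
    {φ : (Fin n → ℝ) →ₗ[ℝ] ℝ}
    (hedge : ∀ F, IsFace (convexHull ℝ V) F → v ∈ F → fdim F = 1 → ∀ x ∈ F, φ v ≤ φ x) :
    ∀ x ∈ convexHull ℝ V, φ v ≤ φ x := by
  obtain ⟨u, hu⟩ := exists_linearMap_lt_of_mem_extremePoints hV hv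
  have hhalf (c : ℝ) : Convex ℝ {x | c ≤ φ x} := convex_halfSpace_ge φ.isLinear c
  have hextreme : ∀ e ∈ (convexHull ℝ (vertexFigure u V v)).extremePoints ℝ, 0 ≤ φ e := by
    intro e he
    obtain ⟨F, hF, hvF, hdim, ε, hε, hmem⟩ :=
      exists_edge_of_mem_extremePoints_vertexFigure hV (extremePoints_convexHull_subset hv) hu he
    have hle := hedge F hF hvF hdim _ hmem
    rw [map_add, map_smul, smul_eq_mul, le_add_iff_nonneg_right] at hle
    exact nonneg_of_mul_nonneg_right hle hε
  have hfigure : convexHull ℝ (vertexFigure u V v) ⊆ {x | 0 ≤ φ x} := by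
    rw [← closure_convexHull_extremePoints ((finite_vertexFigure hV).isCompact_convexHull ℝ)
      (convex_convexHull ℝ _)]
    exact closure_minimal (convexHull_min hextreme (hhalf 0))
      (isClosed_le continuous_const φ.continuous_of_finiteDimensional)
  refine fun x hx ↦ convexHull_min (fun y hy ↦ ?_) (hhalf (φ v)) hx
  rcases eq_or_ne y v with rfl | hyv
  · exact le_refl (φ y)
  · obtain ⟨z, hz, p, hp, rfl⟩ := exists_mem_vertexFigure_eq_add_smul hu hy hyv
    have hnonneg : 0 ≤ φ z := hfigure (subset_convexHull ℝ _ hz)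
    rw [Set.mem_ofPred_eq, map_add, map_smul, le_add_iff_nonneg_right]
    exact mul_nonneg hp.le hnonneg

end VertexFigures

section SmoothPolytopes

variable {n : ℕ} {κ κ' : Type*} {P : Set (Fin n → ℝ)} {v v' x : Fin n → ℝ}
  {b : Module.Basis κ ℝ (Fin n → ℝ)} {b' : Module.Basis κ' ℝ (Fin n → ℝ)}

namespace IsUnimodularCorner

lemma reindex (hb : IsUnimodularCorner P v b) (e : κ ≃ κ') :
    IsUnimodularCorner P v (b.reindex e) where
  isLatticePt_apex := hb.isLatticePt_apex
  isLatticePt_apply i := by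
    rw [b.reindex_apply]
    exact hb.isLatticePt_apply _
  isInt_repr x hx i := by
    rw [b.repr_reindex_apply]
    exact hb.isInt_repr x hx _
  repr_nonneg x hx i := by
    rw [b.repr_reindex_apply]
    exact hb.repr_nonneg x hx _
  exists_edge i := by
    rw [b.reindex_apply]
    exact hb.exists_edge _

lemma repr_sub_eq_zero [Finite κ] (hb : IsUnimodularCorner P v b) {u : (Fin n → ℝ) →ₗ[ℝ] ℝ}
    (hu : ∀ x ∈ P, u v ≤ u x) {i : κ} (hi : u (b i) ≠ 0) (hx : x ∈ P) (hux : u x = u v) :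
    b.repr (x - v) i = 0 := by
  have : Fintype κ := Fintype.ofFinite κ
  have hsum : ∑ k, b.repr (x - v) k * u (b k) = 0 := by
    rw [← linearMap_apply_eq_sum_repr_mul, map_sub, hux, sub_self]
  have hterm := (Finset.sum_eq_zero_iff_of_nonneg fun k _ ↦
    mul_nonneg (hb.repr_nonneg x hx k) (hb.apply_nonneg hu k)).1 hsum i (Finset.mem_univ i)
  exact (mul_eq_zero.1 hterm).resolve_right hi

lemma repr_apply_eq_zero [Finite κ] (hb : IsUnimodularCorner P v b)
    (hb' : IsUnimodularCorner P v' b') (hv' : v' ∈ P) {u : (Fin n → ℝ) →ₗ[ℝ] ℝ}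
    (hu : ∀ x ∈ P, u v ≤ u x) {i : κ} (hi : u (b i) ≠ 0) (huv : u v' = u v) {k : κ'}
    (hk : u (b' k) = 0) : b.repr (b' k) i = 0 := by
  obtain ⟨ε, hε, hmem⟩ := hb'.exists_edge k
  have hedge := hb.repr_sub_eq_zero hu hi hmem (by simp [hk, huv])
  have hapex := hb.repr_sub_eq_zero hu hi hv' huv
  rw [add_sub_right_comm, map_add, map_smul, Finsupp.add_apply, hapex, zero_add,
    Finsupp.smul_apply, smul_eq_mul] at hedge
  exact (mul_eq_zero.1 hedge).resolve_left hε.ne'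

lemma exists_repr_eq [Finite κ] (hb : IsUnimodularCorner P v b) (hb' : IsUnimodularCorner P v' b')
    (hv' : v' ∈ P) {j : κ'} (hj : b'.repr (v - v') j = 0) :
    ∃ i, ∀ x, b.repr (x - v) i = b'.repr (x - v') j := by
  have hu_sub (x : Fin n → ℝ) : b'.coord j x - b'.coord j v = b'.repr (x - v') j := by
    rw [← map_sub, ← sub_sub_sub_cancel_right x v v', map_sub, b'.coord_apply, b'.coord_apply, hj,
      sub_zero]
  have hu : ∀ x ∈ P, b'.coord j v ≤ b'.coord j x := fun x hx ↦
    sub_nonneg.1 (hu_sub x ▸ hb'.repr_nonneg x hx j)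
  obtain ⟨i, hi⟩ : ∃ i, b'.coord j (b i) ≠ 0 := by
    by_contra! hzero
    have hcoord : b'.coord j = 0 := b.ext hzero
    simpa using LinearMap.congr_fun hcoord (b' j)
  have hprop : b.coord i = b.repr (b' j) i • b'.coord j := by
    refine b'.ext fun k ↦ ?_
    rcases eq_or_ne k j with rfl | hkj
    · simp
    · have hk : b'.coord j (b' k) = 0 := by simp [hkj]
      have huv : b'.coord j v' = b'.coord j v := sub_eq_zero.1 ((hu_sub v').trans (by simp))
      rw [LinearMap.smul_apply, hk, smul_zero]
      exact hb.repr_apply_eq_zero hb' hv' hu hi huv hk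
  have hunit : b.repr (b' j) i = 1 := by
    obtain ⟨p, hp⟩ := hb.isInt_repr _ (hb'.isLatticePt_apply j) i
    obtain ⟨q, hq⟩ := hb'.isInt_repr _ (hb.isLatticePt_apply i) j
    have hq_nonneg : 0 ≤ b'.coord j (b i) := hb.apply_nonneg hu i
    have hmul : 1 = b.repr (b' j) i * b'.repr (b i) j := by
      simpa using LinearMap.congr_fun hprop (b i)
    rw [b'.coord_apply, hq] at hq_nonneg
    rw [hp, hq] at hmul
    have hq_one : q = 1 := Int.eq_one_of_mul_eq_one_left (a := p) (by exact_mod_cast hq_nonneg)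
      (by exact_mod_cast hmul.symm)
    rw [hp, hmul, hq_one, Int.cast_one, mul_one]
  refine ⟨i, fun x ↦ ?_⟩
  rw [← hu_sub, ← map_sub, ← b.coord_apply, hprop, hunit, one_smul]

end IsUnimodularCorner

lemma mem_of_forall_repr_nonneg [Finite κ] (hP : IsCompact P) (hconv : Convex ℝ P)
    (hne : P.Nonempty) {b : P.extremePoints ℝ → Module.Basis κ ℝ (Fin n → ℝ)}
    (hb : ∀ v : P.extremePoints ℝ, IsUnimodularCorner P v (b v))
    (hx : ∀ v i, 0 ≤ (b v).repr (x - v) i) : x ∈ P := by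
  by_contra hxP
  obtain ⟨u, c, huc, hcu⟩ := geometric_hahn_banach_point_closed hconv hP.isClosed hxP
  obtain ⟨y, hy, hmin⟩ := hP.exists_isMinOn hne u.continuous.continuousOn
  have hface : IsFace P {z ∈ P | u z = u y} := ⟨⟨y, hy, rfl⟩, u, u y, hmin, rfl⟩
  obtain ⟨v, hvF, hv⟩ :=
    exists_mem_extremePoints_of_isExtreme hface.isExtreme (hface.isCompact hP) hface.1
  have hcone : 0 ≤ u (x - v) := by
    have : Fintype κ := Fintype.ofFinite κ
    refine (linearMap_apply_eq_sum_repr_mul (b ⟨v, hv⟩) u (x - v)).symm ▸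
      Finset.sum_nonneg fun i _ ↦ mul_nonneg (hx ⟨v, hv⟩ i) ?_
    exact (hb ⟨v, hv⟩).apply_nonneg (u := u) (fun z hz ↦ hvF.2.le.trans (hmin hz)) i
  rw [map_sub] at hcone
  linarith [hcu v hv.1]

lemma IsSmoothPoly.exists_isUnimodularCorner (hsm : IsSmoothPoly P) (hP : IsLatticePolytope P)
    (hfull : affineSpan ℝ P = ⊤) (hv : v ∈ P.extremePoints ℝ) :
    ∃ b : Module.Basis (Fin n) ℝ (Fin n → ℝ), IsUnimodularCorner P v b := by
  obtain ⟨V, hV, rfl⟩ := hP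
  have hspan : vectorSpan ℝ (convexHull ℝ (V : Set (Fin n → ℝ))) = ⊤ :=
    AffineSubspace.vectorSpan_eq_top_of_affineSpan_eq_top _ _ _ hfull
  have hdim : fdim (convexHull ℝ (V : Set (Fin n → ℝ))) = n := by
    rw [fdim, hspan, finrank_top, Module.finrank_fin_fun]
  have hcorner := hsm v hv
  rw [hdim] at hcorner
  obtain ⟨w, c, hc, -, hli, -, hgen, hedge⟩ := hcorner
  let b := basisOfLinearIndependentOfCardEqFinrank' _ hli (by simp)
  have hb (i : Fin n) : b i = fun j ↦ (w i j : ℝ) :=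
    congrFun (coe_basisOfLinearIndependentOfCardEqFinrank' _ hli _) i
  simp only [← hb] at hgen hedge
  refine ⟨b, hV v (extremePoints_convexHull_subset hv), fun i j ↦ ⟨w i j, congrFun (hb i) j⟩,
    fun x hx i ↦ ?_, fun x hx i ↦ ?_, fun i ↦ ⟨c i, hc i, ?_⟩⟩
  · choose z hz using hx
    obtain ⟨m, hm⟩ := hgen z (hspan ▸ Submodule.mem_top)
    refine ⟨m i, ?_⟩
    rw [funext hz, hm, b.repr_sum_self]
  · rw [← b.coord_apply, map_sub, sub_nonneg]
    refine le_of_forall_edge V.finite_toSet hv (fun F hF hvF hF1 y hy ↦ ?_) x hx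
    obtain ⟨k, rfl⟩ := (hedge F).1 ⟨hF, hvF, hF1⟩
    rw [segment_eq_image'] at hy
    obtain ⟨t, ht, rfl⟩ := hy
    have hik : 0 ≤ b.coord i (b k) := by
      rw [b.coord_apply, b.repr_self]
      exact Finsupp.single_nonneg.2 zero_le_one i
    rw [add_sub_cancel_left, map_add, map_smul, map_smul, le_add_iff_nonneg_right]
    exact smul_nonneg ht.1 (smul_nonneg (hc k).le hik)
  · obtain ⟨⟨-, u, d, -, hseg⟩, -⟩ := (hedge _).2 ⟨i, rfl⟩
    exact (hseg.le (right_mem_segment ℝ _ _)).1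

/-- The coordinate of `x - v` along `b i`: the facet slack, i.e. the lattice distance to a facet
through `v`, attached to the edge direction `b i` of a unimodular corner at `v`. -/
def cornerSlack (b : Module.Basis κ ℝ (Fin n → ℝ)) (v : Fin n → ℝ) (i : κ) :
    (Fin n → ℝ) →ᵃ[ℝ] ℝ :=
  (b.coord i).toAffineMap - AffineMap.const ℝ _ (b.coord i v)

lemma cornerSlack_apply (i : κ) : cornerSlack b v i x = b.repr (x - v) i :=
  (map_sub (b.coord i) x v).symm

lemma cornerSlack_injective : Function.Injective (cornerSlack b v) := by
  intro i j hij
  have h := DFunLike.congr_fun hij (v + b i)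
  rw [cornerSlack_apply, cornerSlack_apply, add_sub_cancel_left] at h
  by_contra hne
  simp [hne] at h

lemma IsUnimodularCorner.exists_isSlackCorner (hb : IsUnimodularCorner P v b)
    {S : Set ((Fin n → ℝ) →ᵃ[ℝ] ℝ)} (hS : ∀ f, f ∈ S ∧ f v = 0 ↔ f ∈ Set.range (cornerSlack b v)) :
    ∃ b', IsSlackCorner P (Subtype.val : S → _) v b' := by
  let corner (i : κ) : {z : S // z.1 v = 0} :=
    ⟨⟨cornerSlack b v i, ((hS _).2 ⟨i, rfl⟩).1⟩, ((hS _).2 ⟨i, rfl⟩).2⟩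
  have hbij : Function.Bijective corner := by
    refine ⟨fun i j hij ↦ cornerSlack_injective (congrArg (fun z ↦ z.1.1) hij), fun z ↦ ?_⟩
    obtain ⟨i, hi⟩ := (hS z).1 ⟨z.1.2, z.2⟩
    exact ⟨i, Subtype.ext (Subtype.ext hi)⟩
  refine ⟨b.reindex (.ofBijective corner hbij), hb.reindex _, fun z x ↦ ?_⟩
  obtain ⟨i, rfl⟩ := hbij.surjective z
  rw [b.repr_reindex_apply, Equiv.ofBijective_symm_apply_apply]
  exact cornerSlack_apply i

theorem IsSmoothPoly.exists_isFacetSystem (hsm : IsSmoothPoly P) (hP : IsLatticePolytope P)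
    (hfull : affineSpan ℝ P = ⊤) :
    ∃ (ι : Type) (_ : Finite ι) (slack : ι → (Fin n → ℝ) →ᵃ[ℝ] ℝ), IsFacetSystem P slack := by
  choose b hb using fun v : P.extremePoints ℝ ↦ hsm.exists_isUnimodularCorner hP hfull v.2
  obtain ⟨V, -, hPV⟩ := hP
  have hcomp : IsCompact P := hPV ▸ V.finite_toSet.isCompact_convexHull ℝ
  have hconv : Convex ℝ P := hPV ▸ convex_convexHull ℝ _
  have hne : P.Nonempty := (affineSpan_nonempty ℝ).1 (hfull ▸ ⟨0, AffineSubspace.mem_top ℝ _ 0⟩)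
  have hfin : Finite (P.extremePoints ℝ) :=
    (V.finite_toSet.subset (hPV ▸ extremePoints_convexHull_subset)).to_subtype
  let form (q : P.extremePoints ℝ × Fin n) := cornerSlack (b q.1) q.1 q.2
  refine ⟨Set.range form, inferInstance, Subtype.val, ?_, hcomp, ?_, ?_⟩
  · refine fun x ↦ ⟨?_, fun hx ↦ mem_of_forall_repr_nonneg hcomp hconv hne hb fun v i ↦ ?_⟩
    · rintro hx ⟨_, ⟨v, i⟩, rfl⟩
      exact cornerSlack_apply (b := b v) i ▸ (hb v).repr_nonneg x hx i
    · exact cornerSlack_apply (b := b v) i ▸ hx ⟨_, (v, i), rfl⟩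
  · rintro x hx ⟨_, ⟨v, i⟩, rfl⟩
    exact cornerSlack_apply (b := b v) i ▸
      (hb v).isInt_repr _ (hx.sub (hb v).isLatticePt_apex) i
  · intro v hv
    refine (hb ⟨v, hv⟩).exists_isSlackCorner fun f ↦ ⟨?_, ?_⟩
    · rintro ⟨⟨⟨v', j⟩, rfl⟩, hj⟩
      obtain ⟨i, hi⟩ := (hb ⟨v, hv⟩).exists_repr_eq (hb v') v'.2.1
        ((cornerSlack_apply (b := b v') j).symm.trans hj)
      exact ⟨i, AffineMap.ext fun x ↦
        (cornerSlack_apply i).trans ((hi x).trans (cornerSlack_apply j).symm)⟩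
    · rintro ⟨i, rfl⟩
      exact ⟨⟨(⟨v, hv⟩, i), rfl⟩, by simp [cornerSlack_apply]⟩

end SmoothPolytopes

/-- For a smooth full-dimensional lattice polytope `P ⊆ ℝ^n`, the alternating
sum `Σ_F (-1)^{n - dim F} (dim F + 1)! Vol(F)` over all nonempty faces `F` of `P`
(including `P` itself) is nonnegative. -/
theorem stmt7 {n : ℕ} (P : Set (Fin n → ℝ)) (hP : IsLatticePolytope P)
    (hfull : affineSpan ℝ P = ⊤) (hsm : IsSmoothPoly P) :
    ∀ 𝓕 : Finset (Set (Fin n → ℝ)), (∀ F, F ∈ 𝓕 ↔ IsFace P F) →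
      ∀ volf : Set (Fin n → ℝ) → ℝ, (∀ F ∈ 𝓕, HasRelVol F (volf F)) →
        0 ≤ faceSum 𝓕 volf := by
  intro 𝓕 h𝓕 volf hvolf
  obtain ⟨ι, _, slack, H⟩ := hsm.exists_isFacetSystem hP hfull
  exact H.faceSum_nonneg h𝓕 hvolf
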